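/- arXiv:2407.05819 — 3 statements merged into one kernel-verified Lean document; each statement's English description precedes it below -/
import Mathlib

section
/- Let d = 2k+1 with k ≥ 2 and f = x₀^d + (x₀² + x₁²)^k x₂. Then the local Milnor number of V(f) at p = (0:0:1) is μ_p = d² − 3d + 1 and the local Tjurina number is τ_p = d² − 4d + 5; in particular μ_p − τ_p = d − 4 > 0, so the singularity at p is not quasi-homogeneous. -/
open MvPolynomial

/-!
Write `R = ℂ⟦x, y⟧`, `s = x² + y²` and `g = x^(2k+1) + s^k`, so that
`∂ₓg = (2k+1) x^(2k) + 2k x s^(k-1)` and `∂ᵧg = 2k y s^(k-1)`.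

Everything follows from one exact sequence, `length_colon`:
`0 → R/(I : t) → R/I → R/(I + (t)) → 0`. It yields the additivity
`dim R/(a, bc) = dim R/(a, c) + dim R/(a, b)` of intersection multiplicities when `a` is a
nonzerodivisor modulo `c` (`length_pair_mul`). Starting from `dim R/(x, y) = 1` one gets
`dim R/(xⁿ, s^m) = 2nm` and `dim R/(y, xⁿ) = n`.

* Milnor number: `dim R/(∂ₓg, y s^(k-1)) = dim R/(x^(2k), s^(k-1)) + dim R/(y, x^(2k-1))`, which
  is `4k(k-1) + (2k-1)`.
* Tjurina number: by Euler's relation for `x^(2k+1)` and `s^k`, the ideal is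
  `I = (∂ₓg, y s^(k-1), x^(2k+1))`. Adjoining first `x^(2k)` and then `s^(k-1)` gives
  `(x^(2k), s^(k-1))`. Both elements are killed by `x` and `y` modulo the ideal they are
  adjoined to, and neither lies in it, so each step changes the dimension by exactly `1`; the total
  is `4k(k-1) + 2`.
-/

namespace MilnorTjurina

/-! ### Dimensions and exact sequences -/

/-- The local ring `ℂ⟦x, y⟧`. -/
abbrev R := MvPowerSeries (Fin 2) ℂ

/-- The first coordinate. -/
noncomputable abbrev x : R := MvPowerSeries.X 0

/-- The second coordinate. -/
noncomputable abbrev y : R := MvPowerSeries.X 1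

/-- The length over `ℂ` of `R ⧸ I`, that is, its dimension as an element of `ℕ∞`. Working in `ℕ∞`
makes dimensions additive without separate finiteness proofs. -/
noncomputable def len (I : Ideal R) : ℕ∞ := Module.length ℂ (R ⧸ I)

lemma finrank_of_len {I : Ideal R} {n : ℕ} (h : len I = n) : Module.finrank ℂ (R ⧸ I) = n := by
  unfold len at h
  rw [Module.length_eq_rank] at h
  rw [Module.finrank]
  simpa using congrArg ENat.toNat h

/-- Additivity of dimension along `0 → R/Q → R/I → R/I' → 0`, where the first map is
multiplication by `t`, `Q = (I : t)` and `I' = I + (t)`. -/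
lemma length_colon {I I' Q : Ideal R} (t : R) (hI' : I' = I ⊔ Ideal.span {t})
    (hQ : ∀ h, h ∈ Q ↔ t * h ∈ I) : len I = len I' + len Q := by
  have hle : I ≤ I' := hI' ▸ le_sup_left
  let f : (R ⧸ Q) →ₗ[R] (R ⧸ I) := Submodule.mapQ Q I (LinearMap.mulLeft R t)
    (fun h hh => (hQ h).1 hh)
  let g : (R ⧸ I) →ₗ[R] (R ⧸ I') := Submodule.factor hle
  have hf : Function.Injective f := by
    rw [← LinearMap.ker_eq_bot, LinearMap.ker_eq_bot']
    intro m hm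
    obtain ⟨h, rfl⟩ := Submodule.Quotient.mk_surjective _ m
    have : t * h ∈ I := (Submodule.Quotient.mk_eq_zero I).1 hm
    exact (Submodule.Quotient.mk_eq_zero Q).2 ((hQ h).2 this)
  have hg : Function.Surjective g := Submodule.factor_surjective hle
  have hex : Function.Exact f g := by
    intro m
    obtain ⟨h, rfl⟩ := Submodule.Quotient.mk_surjective _ m
    constructor
    · intro hm
      have h1 : h ∈ I' := (Submodule.Quotient.mk_eq_zero I').1 hm
      rw [hI', Submodule.mem_sup] at h1
      obtain ⟨a, ha, b, hb, rfl⟩ := h1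
      obtain ⟨c, rfl⟩ := Ideal.mem_span_singleton.1 hb
      refine ⟨Submodule.Quotient.mk c, ?_⟩
      change Submodule.Quotient.mk (t * c) = _
      rw [Submodule.Quotient.eq]
      have : t * c - (a + t * c) = -a := by ring
      rw [this]
      exact I.neg_mem ha
    · rintro ⟨c, hc⟩
      obtain ⟨c, rfl⟩ := Submodule.Quotient.mk_surjective _ c
      rw [← hc]
      refine (Submodule.Quotient.mk_eq_zero I').2 ?_
      rw [hI']
      exact Ideal.mem_sup_right (Ideal.mul_mem_right c _ (Ideal.mem_span_singleton_self t))
  rw [add_comm]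
  exact Module.length_eq_add_of_exact (f.restrictScalars ℂ) (g.restrictScalars ℂ) hf hg hex

lemma mem_span_triple {a b c z : R} :
    z ∈ Ideal.span {a, b, c} ↔ ∃ p q r : R, p * a + q * b + r * c = z :=
  Submodule.mem_span_triple

/-- Additivity of intersection multiplicities, with `a` a nonzerodivisor modulo `c`. -/
lemma length_pair_mul {a b c : R} (hc : c ≠ 0) (h : ∀ u, c ∣ a * u → c ∣ u) :
    len (Ideal.span {a, b * c}) = len (Ideal.span {a, c}) + len (Ideal.span {a, b}) := by
  apply length_colon c
  · rw [← Ideal.span_union]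
    apply le_antisymm
    · rw [Ideal.span_le]
      rintro z (rfl | rfl)
      · exact Ideal.subset_span (by simp)
      · exact Ideal.subset_span (by simp)
    · rw [Ideal.span_le]
      rintro z ((rfl | rfl) | rfl)
      · exact Ideal.subset_span (by simp)
      · exact Ideal.mul_mem_left _ _ (Ideal.subset_span (by simp))
      · exact Ideal.subset_span (by simp)
  · intro z
    rw [Ideal.mem_span_pair, Ideal.mem_span_pair]
    constructor
    · rintro ⟨p, q, rfl⟩
      exact ⟨p * c, q, by ring⟩
    · rintro ⟨p, q, hpq⟩
      obtain ⟨w, rfl⟩ := h p ⟨z - q * b, by linear_combination hpq⟩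
      exact ⟨w, q, mul_left_cancel₀ hc (by linear_combination hpq)⟩

/-! ### Prime elements and the maximal ideal of `ℂ⟦x, y⟧` -/

/-- The restriction of a power series to the coordinate axis spanned by the `j`-th variable. -/
noncomputable def axis (j : Fin 2) (f : R) : PowerSeries ℂ :=
  PowerSeries.mk fun n => MvPowerSeries.coeff (Finsupp.single j n) f

lemma axis_mul (j : Fin 2) (f g : R) : axis j (f * g) = axis j f * axis j g := by
  classical
  ext n
  simp [axis, PowerSeries.coeff_mul, MvPowerSeries.coeff_mul, Finsupp.antidiagonal_single]

lemma X_dvd_iff_axis {i j : Fin 2} (hij : i ≠ j) (f : R) :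
    (MvPowerSeries.X i : R) ∣ f ↔ axis j f = 0 := by
  rw [MvPowerSeries.X_dvd_iff, PowerSeries.ext_iff]
  simp only [axis, PowerSeries.coeff_mk, map_zero]
  constructor
  · intro h n
    exact h _ (by simp [hij])
  · intro h m hm
    have : m = Finsupp.single j (m j) := by
      ext l
      have : l = i ∨ l = j := by omega
      rcases this with rfl | rfl
      · simp [hm, hij]
      · simp
    rw [this]
    exact h _

lemma prime_X (i : Fin 2) : Prime (MvPowerSeries.X i : R) := by
  obtain ⟨j, hij⟩ : ∃ j, i ≠ j := ⟨1 - i, by omega⟩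
  refine ⟨fun h => ?_, ?_, ?_⟩
  · classical
    simpa [MvPowerSeries.coeff_X] using congrArg (MvPowerSeries.coeff (Finsupp.single i 1)) h
  · intro h
    simpa using h.map (MvPowerSeries.constantCoeff (σ := Fin 2) (R := ℂ))
  · intro a b h
    rw [X_dvd_iff_axis hij, axis_mul] at h
    rw [X_dvd_iff_axis hij, X_dvd_iff_axis hij]
    exact mul_eq_zero.1 h

lemma X_not_dvd_X_pow {i j : Fin 2} (hij : i ≠ j) (n : ℕ) :
    ¬ (MvPowerSeries.X i : R) ∣ MvPowerSeries.X j ^ n := by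
  classical
  intro h
  have h := (prime_X i).dvd_of_dvd_pow h
  rw [MvPowerSeries.X_dvd_iff] at h
  simpa using h (Finsupp.single j 1) (by simp [hij])

lemma mem_max_iff (f : R) : f ∈ Ideal.span {x, y} ↔ MvPowerSeries.constantCoeff f = 0 := by
  constructor
  · rw [Ideal.mem_span_pair]
    rintro ⟨p, q, rfl⟩
    simp
  · intro h
    -- Split off the terms of `f` not involving `x`.
    let g : R := fun m => if m 0 = 0 then MvPowerSeries.coeff m f else 0
    have hg : ∀ m, MvPowerSeries.coeff m g = if m 0 = 0 then MvPowerSeries.coeff m f else 0 :=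
      fun m => rfl
    have h1 : x ∣ f - g := by
      rw [MvPowerSeries.X_dvd_iff]
      intro m hm
      simp [hg, hm]
    have h2 : y ∣ g := by
      rw [MvPowerSeries.X_dvd_iff]
      intro m hm
      rw [hg]
      split_ifs with h0
      · have : m = 0 := by
          ext l
          fin_cases l
          · exact h0
          · exact hm
        rw [this]
        exact h
      · rfl
    obtain ⟨p, hp⟩ := h1
    obtain ⟨q, hq⟩ := h2
    rw [Ideal.mem_span_pair]
    exact ⟨p, q, by linear_combination -hp - hq⟩

lemma len_max : len (Ideal.span {x, y}) = 1 := by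
  let φ : R →ₐ[ℂ] ℂ :=
    { MvPowerSeries.constantCoeff (σ := Fin 2) (R := ℂ) with
      commutes' := fun r => by
        change MvPowerSeries.constantCoeff (MvPowerSeries.C r) = r
        simp }
  have hφ : Function.Surjective φ := fun r => ⟨algebraMap ℂ R r, φ.commutes r⟩
  have hker : Ideal.span {x, y} = RingHom.ker φ := by
    ext f
    rw [mem_max_iff]
    rfl
  rw [hker, len, (Ideal.quotientKerAlgEquivOfSurjective hφ).toLinearEquiv.length_eq]
  exact Module.length_eq_one _ _

/-- Adjoining an element of the socle of `R ⧸ I` lowers the dimension by one. -/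
lemma length_socle {I I' : Ideal R} (t : R) (hI' : I' = I ⊔ Ideal.span {t})
    (hx : x * t ∈ I) (hy : y * t ∈ I) (ht : t ∉ I) : len I = len I' + 1 := by
  rw [← len_max]
  refine length_colon t hI' fun h => ⟨fun hh => ?_, fun hh => ?_⟩
  · obtain ⟨p, q, rfl⟩ := Ideal.mem_span_pair.1 hh
    have : t * (p * x + q * y) = p * (x * t) + q * (y * t) := by ring
    rw [this]
    exact I.add_mem (I.mul_mem_left _ hx) (I.mul_mem_left _ hy)
  · rw [mem_max_iff]
    by_contra hne
    have hu : IsUnit h := MvPowerSeries.isUnit_iff_constantCoeff.2 (isUnit_iff_ne_zero.2 hne)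
    obtain ⟨v, hv⟩ := hu.exists_right_inv
    apply ht
    have : t = v * (t * h) := by linear_combination (-t) * hv
    rw [this]
    exact I.mul_mem_left _ hh

/-! ### The intersection multiplicity of `xⁿ` and `s^m` -/

/-- The quadratic form `x² + y²`. -/
noncomputable abbrev s : R := x ^ 2 + y ^ 2

lemma x_not_dvd_s_pow (m : ℕ) : ¬ x ∣ s ^ m := by
  intro h
  have h := (prime_X 0).dvd_of_dvd_pow h
  have h2 : x ∣ y ^ 2 := (dvd_add_right (dvd_pow_self x two_ne_zero)).1 h
  exact X_not_dvd_X_pow (by decide) 2 h2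

lemma s_ne_zero : s ≠ 0 := by
  intro h
  apply x_not_dvd_s_pow 1
  simp [h]

lemma s_pow_dvd {m n : ℕ} {u : R} (h : s ^ m ∣ x ^ n * u) : s ^ m ∣ u := by
  obtain ⟨w, hw⟩ := h
  have h1 : x ^ n ∣ w :=
    (prime_X 0).pow_dvd_of_dvd_mul_left n (x_not_dvd_s_pow m) ⟨u, hw.symm⟩
  obtain ⟨v, rfl⟩ := h1
  exact ⟨v, mul_left_cancel₀ (pow_ne_zero n (prime_X 0).ne_zero) (by linear_combination hw)⟩

lemma len_y_x_pow (n : ℕ) : len (Ideal.span {y, x ^ n}) = n := by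
  induction n with
  | zero =>
    rw [len]
    have : (Ideal.span {y, x ^ 0} : Ideal R) = ⊤ :=
      (Ideal.eq_top_iff_one _).2 (Ideal.subset_span (by simp))
    rw [this]
    simp
  | succ n ih =>
    rw [pow_succ, length_pair_mul (prime_X 0).ne_zero, ih, Set.pair_comm y x, len_max]
    · push_cast
      rw [add_comm]
    · intro u hu
      refine ((prime_X 0).dvd_or_dvd hu).resolve_left ?_
      simpa using X_not_dvd_X_pow (i := 0) (j := 1) (by decide) 1

lemma len_x_s : len (Ideal.span {x, s}) = 2 := by
  have h : (Ideal.span {x, s} : Ideal R) = Ideal.span {x, y * y} := by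
    have : s = y * y + x * x := by ring
    rw [this, Ideal.span_pair_add_mul_left]
  rw [h, length_pair_mul (prime_X 1).ne_zero, len_max]
  · norm_num
  · intro u hu
    refine ((prime_X 1).dvd_or_dvd hu).resolve_left ?_
    simpa using X_not_dvd_X_pow (i := 1) (j := 0) (by decide) 1

lemma len_s_x_pow (n : ℕ) : len (Ideal.span {s, x ^ n}) = (2 * n : ℕ) := by
  induction n with
  | zero =>
    rw [len]
    have : (Ideal.span {s, x ^ 0} : Ideal R) = ⊤ :=
      (Ideal.eq_top_iff_one _).2 (Ideal.subset_span (by simp))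
    rw [this]
    simp
  | succ n ih =>
    rw [pow_succ, length_pair_mul (prime_X 0).ne_zero, ih, Set.pair_comm s x, len_x_s]
    · rw [mul_add, add_comm]
      push_cast
      rfl
    · intro u hu
      refine ((prime_X 0).dvd_or_dvd hu).resolve_left ?_
      simpa using x_not_dvd_s_pow 1

lemma len_x_pow_s_pow (n m : ℕ) : len (Ideal.span {x ^ n, s ^ m}) = (2 * n * m : ℕ) := by
  induction m with
  | zero =>
    rw [len]
    have : (Ideal.span {x ^ n, s ^ 0} : Ideal R) = ⊤ :=
      (Ideal.eq_top_iff_one _).2 (Ideal.subset_span (by simp))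
    rw [this]
    simp
  | succ m ih =>
    rw [pow_succ, length_pair_mul s_ne_zero, ih, Set.pair_comm (x ^ n) s, len_s_x_pow]
    · norm_cast
      ring_nf
    · intro u hu
      simpa using s_pow_dvd (m := 1) (n := n) (u := u) (by simpa using hu)

/-! ### The Milnor number -/

lemma exists_natCast_inv {n : ℕ} (hn : n ≠ 0) : ∃ p : R, p * n = 1 := by
  refine ⟨MvPowerSeries.C (n : ℂ)⁻¹, ?_⟩
  rw [← map_natCast (MvPowerSeries.C (σ := Fin 2) (R := ℂ)) n, ← map_mul,
    inv_mul_cancel₀ (Nat.cast_ne_zero.2 hn), map_one]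

/-- The derivative `∂ₓg` for `k = m + 1`. -/
noncomputable abbrev gx (m : ℕ) : R :=
  (2 * m + 3 : ℕ) * x ^ (2 * m + 2) + (2 * m + 2 : ℕ) * x * s ^ m

lemma span_gx_s_pow (m : ℕ) :
    (Ideal.span {gx m, s ^ m} : Ideal R) = Ideal.span {x ^ (2 * m + 2), s ^ m} := by
  obtain ⟨p, hp⟩ := exists_natCast_inv (n := 2 * m + 3) (by omega)
  apply le_antisymm
  · rw [Ideal.span_le]
    rintro z (rfl | rfl)
    · exact Ideal.mem_span_pair.2 ⟨_, _, rfl⟩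
    · exact Ideal.subset_span (by simp)
  · rw [Ideal.span_le]
    rintro z (rfl | rfl)
    · exact Ideal.mem_span_pair.2 ⟨p, -p * (2 * m + 2 : ℕ) * x,
        by linear_combination x ^ (2 * m + 2) * hp⟩
    · exact Ideal.subset_span (by simp)

/-- Restricted to the line `y = 0`, `∂ₓg` is `x^(2k-1)` times a unit. -/
lemma span_gx_y (m : ℕ) :
    (Ideal.span {gx m, y} : Ideal R) = Ideal.span {y, x ^ (2 * m + 1)} := by
  have hs : ∃ w, s ^ m = x ^ (2 * m) + y * w := by
    obtain ⟨w, hw⟩ := sub_dvd_pow_sub_pow s (x ^ 2) m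
    exact ⟨y * w, by rw [pow_mul]; linear_combination hw⟩
  obtain ⟨w, hw⟩ := hs
  have hu : IsUnit ((2 * m + 3 : ℕ) * x + (2 * m + 2 : ℕ) : R) := by
    rw [MvPowerSeries.isUnit_iff_constantCoeff, isUnit_iff_ne_zero]
    rw [map_add, map_mul, MvPowerSeries.constantCoeff_X, mul_zero, zero_add, map_natCast]
    exact Nat.cast_ne_zero.2 (by omega)
  obtain ⟨v, hv⟩ := hu.exists_left_inv
  apply le_antisymm
  · rw [Ideal.span_le]
    rintro z (rfl | rfl)
    · exact Ideal.mem_span_pair.2 ⟨(2 * m + 2 : ℕ) * x * w,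
        (2 * m + 3 : ℕ) * x + (2 * m + 2 : ℕ),
        by linear_combination (-(2 * m + 2 : ℕ) * x) * hw⟩
    · exact Ideal.subset_span (by simp)
  · rw [Ideal.span_le]
    rintro z (rfl | rfl)
    · exact Ideal.subset_span (by simp)
    · exact Ideal.mem_span_pair.2 ⟨v, -v * (2 * m + 2 : ℕ) * x * w,
        by linear_combination (v * (2 * m + 2 : ℕ) * x) * hw + x ^ (2 * m + 1) * hv⟩

lemma len_milnor (m : ℕ) :
    len (Ideal.span {gx m, y * s ^ m}) = (2 * (2 * m + 2) * m + (2 * m + 1) : ℕ) := by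
  rw [length_pair_mul (pow_ne_zero m s_ne_zero), span_gx_s_pow, span_gx_y, len_x_pow_s_pow,
    len_y_x_pow]
  · norm_cast
  · intro u hu
    obtain ⟨p, hp⟩ := exists_natCast_inv (n := 2 * m + 3) (by omega)
    obtain ⟨w, hw⟩ := hu
    refine s_pow_dvd (n := 2 * m + 2) ⟨p * (w - (2 * m + 2 : ℕ) * x * u), ?_⟩
    linear_combination p * hw - x ^ (2 * m + 2) * u * hp

/-! ### The Tjurina number -/

lemma s_pow_notMem (m : ℕ) :
    s ^ m ∉ (Ideal.span {x * s ^ m, y * s ^ m, x ^ (2 * m + 2)} : Ideal R) := by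
  intro h
  obtain ⟨A, B, C, h⟩ := mem_span_triple.1 h
  have h1 : s ^ m ∣ C :=
    s_pow_dvd (n := 2 * m + 2) ⟨1 - A * x - B * y, by linear_combination h⟩
  obtain ⟨D, rfl⟩ := h1
  have h2 : A * x + B * y + D * x ^ (2 * m + 2) = 1 :=
    mul_left_cancel₀ (pow_ne_zero m s_ne_zero) (by linear_combination h)
  simpa using congrArg (MvPowerSeries.constantCoeff (σ := Fin 2) (R := ℂ)) h2

/-- If `x^(2k) = A ∂ₓg + B y s^(k-1) + C x^(2k+1)`, then `s^(k-1)` divides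
`1 - (2k+1) A - C x`, so `A` has nonzero constant term. Cancelling `s^(k-1)` shows that
`2k x A + B y` is divisible by `x^(2k)`, so the constant term of `A` is zero, a contradiction. -/
lemma x_pow_notMem {m : ℕ} (hm : m ≠ 0) :
    x ^ (2 * m + 2) ∉ (Ideal.span {gx m, y * s ^ m, x ^ (2 * m + 3)} : Ideal R) := by
  intro h
  obtain ⟨A, B, C, h⟩ := mem_span_triple.1 h
  have h1 : s ^ m ∣ 1 - A * (2 * m + 3 : ℕ) - C * x :=
    s_pow_dvd (n := 2 * m + 2) ⟨(2 * m + 2 : ℕ) * x * A + B * y, by linear_combination -h⟩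
  obtain ⟨D, hD⟩ := h1
  have h2 : x ^ (2 * m + 2) * D = (2 * m + 2 : ℕ) * x * A + B * y :=
    mul_left_cancel₀ (pow_ne_zero m s_ne_zero)
      (by linear_combination -h - x ^ (2 * m + 2) * hD)
  have h3 : x ∣ B := by
    have : x ∣ B * y := ⟨x ^ (2 * m + 1) * D - (2 * m + 2 : ℕ) * A, by linear_combination -h2⟩
    refine ((prime_X 0).dvd_or_dvd this).resolve_right ?_
    simpa using X_not_dvd_X_pow (i := 0) (j := 1) (by decide) 1
  obtain ⟨E, rfl⟩ := h3
  have h4 : x ^ (2 * m + 1) * D = (2 * m + 2 : ℕ) * A + E * y :=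
    mul_left_cancel₀ (prime_X 0).ne_zero (by linear_combination h2)
  have h5 := congrArg (MvPowerSeries.constantCoeff (σ := Fin 2) (R := ℂ)) h4
  have h6 := congrArg (MvPowerSeries.constantCoeff (σ := Fin 2) (R := ℂ)) hD
  rw [map_add, map_mul, map_mul, map_mul, map_pow, MvPowerSeries.constantCoeff_X,
    MvPowerSeries.constantCoeff_X, map_natCast, zero_pow (by omega), zero_mul, mul_zero, add_zero,
    eq_comm, mul_eq_zero] at h5
  have h7 := h5.resolve_left (Nat.cast_ne_zero.2 (by omega))
  simp [h7, hm] at h6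

lemma len_tjurina {m : ℕ} (hm : m ≠ 0) :
    len (Ideal.span {gx m, y * s ^ m, x ^ (2 * m + 3)}) = (2 * (2 * m + 2) * m + 2 : ℕ) := by
  obtain ⟨p, hp⟩ := exists_natCast_inv (n := 2 * m + 2) (by omega)
  have e1 : len (Ideal.span {gx m, y * s ^ m, x ^ (2 * m + 3)}) =
      len (Ideal.span {x * s ^ m, y * s ^ m, x ^ (2 * m + 2)}) + 1 := by
    refine length_socle (x ^ (2 * m + 2)) ?_ ?_ ?_ (x_pow_notMem hm)
    · rw [← Ideal.span_union]
      apply le_antisymm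
      · rw [Ideal.span_le]
        rintro z (rfl | rfl | rfl)
        · have : x * s ^ m = p * gx m - (p * (2 * m + 3 : ℕ)) * x ^ (2 * m + 2) := by
            linear_combination -x * s ^ m * hp
          rw [this]
          exact Ideal.sub_mem _ (Ideal.mul_mem_left _ _ (Ideal.subset_span (by simp)))
            (Ideal.mul_mem_left _ _ (Ideal.subset_span (by simp)))
        · exact Ideal.subset_span (by simp)
        · exact Ideal.subset_span (by simp)
      · rw [Ideal.span_le]
        rintro z ((rfl | rfl | rfl) | rfl)
        · exact mem_span_triple.2 ⟨(2 * m + 2 : ℕ), 0, (2 * m + 3 : ℕ), by ring⟩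
        · exact Ideal.subset_span (by simp)
        · exact mem_span_triple.2 ⟨0, 0, x, by ring⟩
        · exact Ideal.subset_span (by simp)
    · exact mem_span_triple.2 ⟨0, 0, 1, by ring⟩
    · obtain ⟨q, hq⟩ := exists_natCast_inv (n := 2 * m + 3) (by omega)
      exact mem_span_triple.2 ⟨q * y, -q * (2 * m + 2 : ℕ) * x, 0,
        by linear_combination y * x ^ (2 * m + 2) * hq⟩
  have e2 : len (Ideal.span {x * s ^ m, y * s ^ m, x ^ (2 * m + 2)}) =
      len (Ideal.span {x ^ (2 * m + 2), s ^ m}) + 1 := by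
    refine length_socle (s ^ m) ?_ (Ideal.subset_span (by simp)) (Ideal.subset_span (by simp))
      (s_pow_notMem m)
    rw [← Ideal.span_union]
    apply le_antisymm
    · rw [Ideal.span_le]
      rintro z (rfl | rfl)
      · exact Ideal.subset_span (by simp)
      · exact Ideal.subset_span (by simp)
    · rw [Ideal.span_le]
      rintro z ((rfl | rfl | rfl) | rfl)
      · exact Ideal.mul_mem_left _ _ (Ideal.subset_span (by simp))
      · exact Ideal.mul_mem_left _ _ (Ideal.subset_span (by simp))
      · exact Ideal.subset_span (by simp)
      · exact Ideal.subset_span (by simp)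
  rw [e1, e2, len_x_pow_s_pow]
  norm_cast

/-! ### The ideals generated by the partial derivatives -/

lemma span_milnor (m : ℕ) :
    (Ideal.span {gx m, (2 * m + 2 : ℕ) * (y * s ^ m)} : Ideal R) =
      Ideal.span {gx m, y * s ^ m} := by
  obtain ⟨p, hp⟩ := exists_natCast_inv (n := 2 * m + 2) (by omega)
  apply le_antisymm
  · rw [Ideal.span_le]
    rintro z (rfl | rfl)
    · exact Ideal.subset_span (by simp)
    · exact Ideal.mul_mem_left _ _ (Ideal.subset_span (by simp))
  · rw [Ideal.span_le]
    rintro z (rfl | rfl)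
    · exact Ideal.subset_span (by simp)
    · exact Ideal.mem_span_pair.2 ⟨0, p, by linear_combination y * s ^ m * hp⟩

/-- By Euler's relation, `x ∂ₓg + y ∂ᵧg = 2k g + x^(2k+1)`, so `g` may be replaced by `x^(2k+1)`
as third generator of the Tjurina ideal. -/
lemma span_tjurina (m : ℕ) :
    (Ideal.span {gx m, (2 * m + 2 : ℕ) * (y * s ^ m), x ^ (2 * m + 3) + s ^ (m + 1)} : Ideal R) =
      Ideal.span {gx m, y * s ^ m, x ^ (2 * m + 3)} := by
  obtain ⟨p, hp⟩ := exists_natCast_inv (n := 2 * m + 2) (by omega)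
  have hc : ((2 * m + 3 : ℕ) : R) = (2 * m + 2 : ℕ) + 1 := by push_cast; ring
  apply le_antisymm
  · rw [Ideal.span_le]
    rintro z (rfl | rfl | rfl)
    · exact Ideal.subset_span (by simp)
    · exact Ideal.mul_mem_left _ _ (Ideal.subset_span (by simp))
    · refine mem_span_triple.2 ⟨p * x, y, -p, ?_⟩
      rw [gx, hc]
      linear_combination (x ^ (2 * m + 3) + x ^ 2 * s ^ m) * hp
  · rw [Ideal.span_le]
    rintro z (rfl | rfl | rfl)
    · exact Ideal.subset_span (by simp)
    · exact mem_span_triple.2 ⟨0, p, 0, by linear_combination y * s ^ m * hp⟩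
    · refine mem_span_triple.2 ⟨x, y, -(2 * m + 2 : ℕ), ?_⟩
      rw [gx, hc]
      ring

lemma coe_pderiv_zero (m : ℕ) :
    ((pderiv 0 ((X 0 : MvPolynomial (Fin 2) ℂ) ^ (2 * (m + 1) + 1)
      + (X 0 ^ 2 + X 1 ^ 2) ^ (m + 1)) : MvPolynomial (Fin 2) ℂ) : R) = gx m := by
  have : pderiv 0 ((X 0 : MvPolynomial (Fin 2) ℂ) ^ (2 * (m + 1) + 1)
      + (X 0 ^ 2 + X 1 ^ 2) ^ (m + 1)) =
      ((2 * m + 3 : ℕ) : MvPolynomial (Fin 2) ℂ) * X 0 ^ (2 * m + 2) +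
        ((2 * m + 2 : ℕ) : MvPolynomial (Fin 2) ℂ) * X 0 * (X 0 ^ 2 + X 1 ^ 2) ^ m := by
    simp only [map_add, Derivation.leibniz_pow, pderiv_X_self, smul_eq_mul, nsmul_eq_mul,
      pderiv_X_of_ne (show (1 : Fin 2) ≠ 0 by decide), Nat.add_sub_cancel]
    push_cast
    ring
  rw [this]
  rw [← coeToMvPowerSeries.ringHom_apply]
  simp only [map_add, map_mul, map_pow, map_natCast, coeToMvPowerSeries.ringHom_apply, coe_X]

lemma coe_pderiv_one (m : ℕ) :
    ((pderiv 1 ((X 0 : MvPolynomial (Fin 2) ℂ) ^ (2 * (m + 1) + 1)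
      + (X 0 ^ 2 + X 1 ^ 2) ^ (m + 1)) : MvPolynomial (Fin 2) ℂ) : R) =
      (2 * m + 2 : ℕ) * (y * s ^ m) := by
  have : pderiv 1 ((X 0 : MvPolynomial (Fin 2) ℂ) ^ (2 * (m + 1) + 1)
      + (X 0 ^ 2 + X 1 ^ 2) ^ (m + 1)) =
      ((2 * m + 2 : ℕ) : MvPolynomial (Fin 2) ℂ) * (X 1 * (X 0 ^ 2 + X 1 ^ 2) ^ m) := by
    simp only [map_add, Derivation.leibniz_pow, pderiv_X_self, smul_eq_mul, nsmul_eq_mul,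
      pderiv_X_of_ne (show (0 : Fin 2) ≠ 1 by decide), Nat.add_sub_cancel]
    push_cast
    ring
  rw [this]
  rw [← coeToMvPowerSeries.ringHom_apply]
  simp only [map_add, map_mul, map_pow, map_natCast, coeToMvPowerSeries.ringHom_apply, coe_X]

lemma coe_g (m : ℕ) :
    (((X 0 : MvPolynomial (Fin 2) ℂ) ^ (2 * (m + 1) + 1)
      + (X 0 ^ 2 + X 1 ^ 2) ^ (m + 1) : MvPolynomial (Fin 2) ℂ) : R) =
      x ^ (2 * m + 3) + s ^ (m + 1) := by
  rw [← coeToMvPowerSeries.ringHom_apply]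
  simp only [map_add, map_pow, coeToMvPowerSeries.ringHom_apply, coe_X]
  rfl

end MilnorTjurina

/-- For `f = x₀^d + (x₀²+x₁²)^k x₂` with `d = 2k+1`, `k ≥ 2`, the local equation at
`p = (0:0:1)` is `g = x₀^d + (x₀²+x₁²)^k`, and one has `μ_p = d²−3d+1`,
`τ_p = d²−4d+5`; in particular `μ_p ≠ τ_p`, so `p` is not quasi-homogeneous. -/
theorem three_syzygy_curve_milnor_tjurina
    (k : ℕ) (hk : 2 ≤ k) :
    (Module.finrank ℂ (MvPowerSeries (Fin 2) ℂ ⧸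
        Ideal.span {((pderiv 0 ((X 0 : MvPolynomial (Fin 2) ℂ) ^ (2 * k + 1)
              + (X 0 ^ 2 + X 1 ^ 2) ^ k) : MvPolynomial (Fin 2) ℂ) : MvPowerSeries (Fin 2) ℂ),
          ((pderiv 1 ((X 0 : MvPolynomial (Fin 2) ℂ) ^ (2 * k + 1)
              + (X 0 ^ 2 + X 1 ^ 2) ^ k) : MvPolynomial (Fin 2) ℂ) : MvPowerSeries (Fin 2) ℂ)})
      = (2 * k + 1) ^ 2 - 3 * (2 * k + 1) + 1) ∧
    (Module.finrank ℂ (MvPowerSeries (Fin 2) ℂ ⧸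
        Ideal.span {((pderiv 0 ((X 0 : MvPolynomial (Fin 2) ℂ) ^ (2 * k + 1)
              + (X 0 ^ 2 + X 1 ^ 2) ^ k) : MvPolynomial (Fin 2) ℂ) : MvPowerSeries (Fin 2) ℂ),
          ((pderiv 1 ((X 0 : MvPolynomial (Fin 2) ℂ) ^ (2 * k + 1)
              + (X 0 ^ 2 + X 1 ^ 2) ^ k) : MvPolynomial (Fin 2) ℂ) : MvPowerSeries (Fin 2) ℂ),
          (((X 0 : MvPolynomial (Fin 2) ℂ) ^ (2 * k + 1) + (X 0 ^ 2 + X 1 ^ 2) ^ k :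
            MvPolynomial (Fin 2) ℂ) : MvPowerSeries (Fin 2) ℂ)})
      = (2 * k + 1) ^ 2 - 4 * (2 * k + 1) + 5) := by
  obtain ⟨m, rfl⟩ : ∃ m, k = m + 1 := ⟨k - 1, by omega⟩
  rw [MilnorTjurina.coe_pderiv_zero, MilnorTjurina.coe_pderiv_one, MilnorTjurina.coe_g,
    MilnorTjurina.span_milnor, MilnorTjurina.span_tjurina,
    MilnorTjurina.finrank_of_len (MilnorTjurina.len_milnor m),
    MilnorTjurina.finrank_of_len (MilnorTjurina.len_tjurina (by omega))]
  -- The truncated subtractions are exact: `m * m` is an atom for `omega`.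
  have h1 : (2 * (m + 1) + 1) ^ 2 = 4 * (m * m) + 12 * m + 9 := by ring
  have h2 : 2 * (2 * m + 2) * m = 4 * (m * m) + 4 * m := by ring
  have h3 : m ≤ m * m := Nat.le_mul_self m
  constructor <;> omega
end

section
/- Let f ∈ ℂ[x₀,x₁,x₂] be homogeneous of degree d with isolated singularities, and suppose the syzygy module Syz(J_f) is free generated in degrees d₁ ≤ d₂. Then d₁ + d₂ = d − 1 and the total Tjurina number satisfies τ(C) = (d−1)² − d₁·d₂, where τ(C) = deg(R/J_f) is the degree of the Jacobian scheme. -/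
/-!
Write `s = d - 1`, `g = ∇f`, and let `w = e₁ × e₂`, a nonzero vector of forms of degree `d₁ + d₂`.

*Lower bound `s ≤ d₁ + d₂`.* Since `f` is squarefree, the partial derivatives have no common
irreducible factor: by Euler's identity such a factor `h` divides `f = h k`, hence `h ∣ (∂ᵢh) k`,
and as `h ∤ k` it divides every `∂ᵢh`, which is impossible for degree reasons
(`not_forall_dvd_pderiv`). Both `w` and `g` are orthogonal to `e₁` and `e₂`, so `wᵢ gⱼ = wⱼ gᵢ`;
coprimality of the `gⱼ` then gives `gᵢ ∣ wᵢ`, and comparing degrees where `wᵢ ≠ 0` gives the bound.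

*Hilbert function.* In each degree the resolution
`0 → R(-d₁) ⊕ R(-d₂) → R³ → J_f(s) → 0` is an exact sequence of finite-dimensional spaces, so
`dim (J_f)_{n+s} = 3 H(n) - H(n - d₁) - H(n - d₂)` with `H(n) = (n + 1)(n + 2) / 2`
(`finrank_jacobian`). Hence `dim (R/J_f)_{n+s}` is, for large `n`, a polynomial in `n` of degree at
most one with leading term `(s - d₁ - d₂) n`.

*Conclusion.* This dimension is nonnegative, which forces `d₁ + d₂ ≤ s`. With equality, the
polynomial is the constant `s² - d₁ d₂`.
-/

open MvPolynomial

lemma totalDegree_pderiv_lt {σ R : Type*} [CommSemiring R] (i : σ) (h : MvPolynomial σ R)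
    (hi : pderiv i h ≠ 0) : (pderiv i h).totalDegree < h.totalDegree := by
  obtain ⟨m, hm, hm'⟩ := Finset.exists_mem_eq_sup _ (support_nonempty.2 hi)
    (fun m : σ →₀ ℕ => m.sum fun _ e => e)
  have h1 : m + Finsupp.single i 1 ∈ h.support := by
    rw [mem_support_iff, coeff_pderiv] at hm
    rw [mem_support_iff]
    intro h0
    simp [h0] at hm
  have h2 := le_totalDegree h1
  have h3 : (m + Finsupp.single i 1).sum (fun _ e => e) = m.sum (fun _ e => e) + 1 := by
    rw [Finsupp.sum_add_index' (fun _ => rfl) (fun _ _ _ => rfl)]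
    simp
  rw [totalDegree, hm']
  omega

/-- In characteristic zero a polynomial with vanishing gradient is constant. -/
lemma eq_C_of_pderiv_eq_zero {σ R : Type*} [CommRing R] [IsDomain R] [CharZero R]
    (h : MvPolynomial σ R) (hd : ∀ i, pderiv i h = 0) : h = C (coeff 0 h) := by
  classical
  ext m
  rw [coeff_C]
  split_ifs with h0
  · rw [h0]
  · obtain ⟨i, hi⟩ : ∃ i, m i ≠ 0 := by
      by_contra! hc
      exact h0 (Finsupp.ext fun i => (hc i).symm)
    have h1 := congrArg (coeff (m - Finsupp.single i 1)) (hd i)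
    have h2 : m - Finsupp.single i 1 + Finsupp.single i 1 = m :=
      tsub_add_cancel_of_le (by simpa [Nat.one_le_iff_ne_zero] using hi)
    rw [coeff_pderiv, h2, coeff_zero] at h1
    rcases mul_eq_zero.1 h1 with h3 | h3
    · exact h3
    · exact absurd h3 (Nat.cast_add_one_ne_zero _)

/-- The partial derivatives of a squarefree form of positive degree have no common irreducible
factor, i.e. the singular locus of the hypersurface has codimension at least two. -/
lemma not_forall_dvd_pderiv {σ K : Type*} [Fintype σ] [Field K] [CharZero K] {d : ℕ}
    (hd : d ≠ 0) {f : MvPolynomial σ K} (hf : f.IsHomogeneous d) (hred : Squarefree f)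
    {h : MvPolynomial σ K} (hirr : Irreducible h) : ¬ ∀ i, h ∣ pderiv i f := by
  intro hdvd
  have hprime : Prime h := hirr.prime
  -- Euler's identity: `d • f` is a combination of the partial derivatives.
  have hfdvd : h ∣ f := by
    have h1 : h ∣ d • f := by
      rw [← hf.sum_X_mul_pderiv]
      exact Finset.dvd_sum fun i _ => (hdvd i).mul_left _
    have hu : IsUnit (C (d : K) : MvPolynomial σ K) :=
      (IsUnit.mk0 (d : K) (by exact_mod_cast hd)).map C
    rw [nsmul_eq_mul] at h1
    rw [map_natCast] at hu
    exact (hu.dvd_mul_left).1 h1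
  obtain ⟨k, rfl⟩ := hfdvd
  have hk : ¬ h ∣ k := fun hk => hirr.not_isUnit (hred h (mul_dvd_mul_left h hk))
  have hz : ∀ i, pderiv i h = 0 := by
    intro i
    by_contra hne
    have h2 : h ∣ pderiv i h * k := by
      have := hdvd i
      rw [pderiv_mul] at this
      exact (dvd_add_left (dvd_mul_right _ _)).1 this
    have h3 : h ∣ pderiv i h := (hprime.dvd_or_dvd h2).resolve_right hk
    obtain ⟨c, hc⟩ := h3
    have h4 := totalDegree_pderiv_lt i h hne
    have hc0 : c ≠ 0 := by rintro rfl; exact hne (by rw [hc, mul_zero])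
    rw [hc, totalDegree_mul_of_isDomain hirr.ne_zero hc0] at h4
    omega
  have hC := eq_C_of_pderiv_eq_zero h hz
  apply hirr.not_isUnit
  rw [hC]
  refine (IsUnit.mk0 _ fun h0 => hirr.ne_zero ?_).map C
  rw [hC, h0, map_zero]

/-- In a UFD, if `a` divides `x * b i` for every member of a family `b` without common irreducible
factor, then `a` divides `x`. One `b i` must be nonzero: if all vanish and the ring is a field,
there are no irreducible elements and `a = 0`, `x = 1` is a counterexample. -/
lemma dvd_of_forall_dvd_mul {α ι : Type*} [CommRing α] [IsDomain α]
    [UniqueFactorizationMonoid α] [Fintype ι] {a x : α} {b : ι → α}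
    (hb0 : ∃ i, b i ≠ 0) (hb : ∀ p, Irreducible p → ¬ ∀ i, p ∣ b i)
    (h : ∀ i, a ∣ x * b i) : a ∣ x := by
  classical
  obtain ⟨_⟩ : Nonempty (NormalizedGCDMonoid α) := inferInstance
  have h1 : a ∣ x * Finset.univ.gcd b :=
    (Finset.dvd_gcd fun i _ => h i).trans (Finset.gcd_mul_left' Finset.univ b x).dvd
  have hu : IsUnit (Finset.univ.gcd b) := by
    by_contra hu
    obtain ⟨p, hp, hpd⟩ := WfDvdMonoid.exists_irreducible_factor hu (by
      obtain ⟨i, hi⟩ := hb0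
      intro h0
      exact hi ((Finset.gcd_eq_zero_iff.1 h0) i (Finset.mem_univ i)))
    exact hb p hp fun i => hpd.trans (Finset.gcd_dvd (Finset.mem_univ i))
  exact (hu.dvd_mul_right).1 h1

instance instFiniteHomogeneousSubmodule (n : ℕ) : Module.Finite ℂ (homogeneousSubmodule (Fin 3) ℂ n) :=
  Module.Finite.iff_fg.2 (homogeneousSubmodule_fg _ _ _)

lemma finrank_homogeneousSubmodule (n : ℕ) :
    Module.finrank ℂ (homogeneousSubmodule (Fin 3) ℂ n) = (n + 2).choose 2 := by
  have hset : {m : Fin 3 →₀ ℕ | m.degree = n} =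
      ((Finset.univ : Finset (Fin 3)).finsuppAntidiag n : Set (Fin 3 →₀ ℕ)) := by
    ext m
    simp [Finset.mem_finsuppAntidiag, Finsupp.degree_eq_sum]
  rw [homogeneousSubmodule_eq_finsupp_supported,
    (AddMonoidAlgebra.supportedEquivFinsupp _).finrank_eq, hset,
    Module.finrank_finsupp_self]
  simp only [Finset.coe_sort_coe, Fintype.card_coe]
  rw [Finset.card_finsuppAntidiag_nat_eq_choose, Finset.card_univ, Fintype.card_fin]
  rw [show 3 + n - 1 = n + 2 by omega, ← Nat.choose_symm_add]

lemma two_mul_finrank_homogeneousSubmodule (n : ℕ) :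
    2 * Module.finrank ℂ (homogeneousSubmodule (Fin 3) ℂ n) = (n + 1) * (n + 2) := by
  rw [finrank_homogeneousSubmodule, Nat.choose_two_right,
    Nat.mul_div_cancel' (Nat.even_mul_pred_self _).two_dvd]
  simp [mul_comm]

lemma homogeneousComponent_add_mul {σ R : Type*} [CommSemiring R] {m n : ℕ}
    (p : MvPolynomial σ R) {q : MvPolynomial σ R} (hq : q.IsHomogeneous n) :
    homogeneousComponent (m + n) (p * q) = homogeneousComponent m p * q := by
  let _ := gradedAlgebra (σ := σ) (R := R)
  have := DirectSum.coe_decompose_mul_add_of_right_mem (homogeneousSubmodule σ R) (i := m)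
    (a := p) (b := q) (j := n) hq
  exact (decomposition.decompose'_apply _ _).symm.trans
    (this.trans (congrArg (· * q) (decomposition.decompose'_apply _ _)))

section Resolution

variable {s n : ℕ} {g : Fin 3 → MvPolynomial (Fin 3) ℂ}

/-- The map `(v₀, v₁, v₂) ↦ v₀ g₀ + v₁ g₁ + v₂ g₂` on triples of forms of degree `n`. When the `gᵢ`
are the partial derivatives of `f`, its kernel is the degree `n` part of `Syz(J_f)`. -/
noncomputable def jacMap (g : Fin 3 → MvPolynomial (Fin 3) ℂ) (n : ℕ) :
    (Fin 3 → homogeneousSubmodule (Fin 3) ℂ n) →ₗ[ℂ] MvPolynomial (Fin 3) ℂ where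
  toFun v := ∑ i, (v i : MvPolynomial (Fin 3) ℂ) * g i
  map_add' v w := by simp [add_mul, Finset.sum_add_distrib]
  map_smul' c v := by simp [Finset.smul_sum]

/-- When the `gᵢ` are forms of degree `s`, the image of `jacMap g n` is the degree `n + s` part of the
ideal they generate: the coefficients of a form in that ideal may be replaced by their
homogeneous components of degree `n`. -/
lemma range_jacMap (hg : ∀ i, (g i).IsHomogeneous s) :
    LinearMap.range (jacMap g n) =
      (Ideal.span {g 0, g 1, g 2}).restrictScalars ℂ ⊓ homogeneousSubmodule (Fin 3) ℂ (n + s) := by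
  ext x
  simp only [LinearMap.mem_range, Submodule.mem_inf, Submodule.restrictScalars_mem,
    mem_homogeneousSubmodule]
  constructor
  · rintro ⟨v, rfl⟩
    refine ⟨?_, IsHomogeneous.sum Finset.univ (fun i => (v i : MvPolynomial (Fin 3) ℂ) * g i) _
      fun i _ => IsHomogeneous.mul (v i).2 (hg i)⟩
    change ∑ i, (v i : MvPolynomial (Fin 3) ℂ) * g i ∈ Ideal.span {g 0, g 1, g 2}
    refine Ideal.sum_mem _ fun i _ => Ideal.mul_mem_left _ _ (Ideal.subset_span ?_)
    fin_cases i <;> simp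
  · rintro ⟨hx, hxh⟩
    obtain ⟨a, b, c, rfl⟩ := Submodule.mem_span_triple.1 hx
    refine ⟨fun i => ⟨homogeneousComponent n (![a, b, c] i), homogeneousComponent_mem _ _⟩, ?_⟩
    rw [← homogeneousComponent_eq_self hxh]
    simp [jacMap, Fin.sum_univ_three, fun (p : MvPolynomial (Fin 3) ℂ) i =>
      homogeneousComponent_add_mul (m := n) p (hg i)]

variable {d₁ d₂ a b : ℕ} {e₁ e₂ : Fin 3 → MvPolynomial (Fin 3) ℂ}

/-- The map `(p, q) ↦ p e₁ + q e₂` from pairs of forms of degrees `a = n - d₁` and `b = n - d₂` to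
triples of forms of degree `n`; the degree equations are hypotheses, to avoid truncated
subtraction. -/
noncomputable def syzMap (he₁ : ∀ i, (e₁ i).IsHomogeneous d₁) (he₂ : ∀ i, (e₂ i).IsHomogeneous d₂)
    (ha : a + d₁ = n) (hb : b + d₂ = n) :
    (homogeneousSubmodule (Fin 3) ℂ a × homogeneousSubmodule (Fin 3) ℂ b) →ₗ[ℂ]
      (Fin 3 → homogeneousSubmodule (Fin 3) ℂ n) where
  toFun pq i := ⟨pq.1 * e₁ i + pq.2 * e₂ i,
    (ha ▸ pq.1.2.mul (he₁ i)).add (hb ▸ pq.2.2.mul (he₂ i))⟩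
  map_add' v w := by
    ext1 i
    ext1
    simp only [Prod.fst_add, Prod.snd_add, Submodule.coe_add, Pi.add_apply]
    ring
  map_smul' c v := by ext1 i; ext1; simp

lemma syzMap_injective (he₁ : ∀ i, (e₁ i).IsHomogeneous d₁) (he₂ : ∀ i, (e₂ i).IsHomogeneous d₂)
    (ha : a + d₁ = n) (hb : b + d₂ = n)
    (hindep : LinearIndependent (MvPolynomial (Fin 3) ℂ) ![e₁, e₂]) :
    Function.Injective (syzMap he₁ he₂ ha hb) := by
  rw [← LinearMap.ker_eq_bot, LinearMap.ker_eq_bot']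
  rintro ⟨p, q⟩ h
  have h1 := LinearIndependent.pair_iff.1 hindep p q (by
    ext1 i
    exact congrArg Subtype.val (congrFun h i))
  exact Prod.ext (Subtype.ext h1.1) (Subtype.ext h1.2)

lemma range_syzMap (he₁ : ∀ i, (e₁ i).IsHomogeneous d₁) (he₂ : ∀ i, (e₂ i).IsHomogeneous d₂)
    (ha : a + d₁ = n) (hb : b + d₂ = n)
    (hs₁ : ∑ i, e₁ i * g i = 0) (hs₂ : ∑ i, e₂ i * g i = 0)
    (hgen : ∀ v : Fin 3 → MvPolynomial (Fin 3) ℂ, (∑ i, v i * g i = 0) →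
        ∃ p q : MvPolynomial (Fin 3) ℂ, v = fun i => p * e₁ i + q * e₂ i) :
    LinearMap.range (syzMap he₁ he₂ ha hb) = LinearMap.ker (jacMap g n) := by
  ext v
  rw [LinearMap.mem_range, LinearMap.mem_ker]
  constructor
  · rintro ⟨⟨p, q⟩, rfl⟩
    simp only [Fin.sum_univ_three] at hs₁ hs₂
    simp only [jacMap, syzMap, LinearMap.coe_mk, AddHom.coe_mk, Fin.sum_univ_three]
    linear_combination (p : MvPolynomial (Fin 3) ℂ) * hs₁ + (q : MvPolynomial (Fin 3) ℂ) * hs₂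
  · intro hv
    obtain ⟨p, q, hpq⟩ := hgen (fun i => v i) hv
    refine ⟨(⟨homogeneousComponent a p, homogeneousComponent_mem _ _⟩,
      ⟨homogeneousComponent b q, homogeneousComponent_mem _ _⟩), ?_⟩
    ext1 i
    ext1
    have h1 := congrArg (homogeneousComponent n) (congrFun hpq i)
    rw [homogeneousComponent_eq_self (v i).2, map_add] at h1
    have h2 := homogeneousComponent_add_mul (m := a) p (he₁ i)
    have h3 := homogeneousComponent_add_mul (m := b) q (he₂ i)
    rw [ha] at h2
    rw [hb] at h3
    rw [h1, h2, h3]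
    rfl

/-- Dimension count along `0 → R_a ⊕ R_b → (R_n)³ → J_{n+s} → 0`, where `a = n - d₁`, `b = n - d₂`,
multiplied by two in order to write `2 dim R_m` as `(m + 1)(m + 2)`. -/
lemma finrank_jacobian (hg : ∀ i, (g i).IsHomogeneous s)
    (he₁ : ∀ i, (e₁ i).IsHomogeneous d₁) (he₂ : ∀ i, (e₂ i).IsHomogeneous d₂)
    (ha : a + d₁ = n) (hb : b + d₂ = n)
    (hs₁ : ∑ i, e₁ i * g i = 0) (hs₂ : ∑ i, e₂ i * g i = 0)
    (hgen : ∀ v : Fin 3 → MvPolynomial (Fin 3) ℂ, (∑ i, v i * g i = 0) →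
        ∃ p q : MvPolynomial (Fin 3) ℂ, v = fun i => p * e₁ i + q * e₂ i)
    (hindep : LinearIndependent (MvPolynomial (Fin 3) ℂ) ![e₁, e₂]) :
    2 * Module.finrank ℂ ((Ideal.span {g 0, g 1, g 2}).restrictScalars ℂ ⊓
        homogeneousSubmodule (Fin 3) ℂ (n + s) : Submodule ℂ (MvPolynomial (Fin 3) ℂ)) +
      ((a + 1) * (a + 2) + (b + 1) * (b + 2)) = 3 * ((n + 1) * (n + 2)) := by
  have h1 := LinearMap.finrank_range_add_finrank_ker (jacMap g n)
  rw [range_jacMap hg, ← range_syzMap he₁ he₂ ha hb hs₁ hs₂ hgen,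
    LinearMap.finrank_range_of_inj (syzMap_injective he₁ he₂ ha hb hindep),
    Module.finrank_prod, Module.finrank_pi_fintype] at h1
  simp only [Finset.sum_const, Finset.card_univ, Fintype.card_fin, smul_eq_mul] at h1
  have := two_mul_finrank_homogeneousSubmodule a
  have := two_mul_finrank_homogeneousSubmodule b
  have := two_mul_finrank_homogeneousSubmodule n
  omega

end Resolution

lemma crossProduct_ne_zero {A : Type*} [CommRing A] [Nontrivial A] {u v : Fin 3 → A}
    (h : LinearIndependent A ![u, v]) : crossProduct u v ≠ 0 := by
  intro h0
  rw [cross_apply] at h0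
  have c0 := congrFun h0 0
  have c1 := congrFun h0 1
  have c2 := congrFun h0 2
  simp only [Matrix.cons_val, Pi.zero_apply] at c0 c1 c2
  have hu : ∀ j, u j = 0 := by
    intro j
    -- The entries of `u j • v - v j • u` are, up to sign, entries of `u × v`.
    have h1 := LinearIndependent.pair_iff.1 h (-(v j)) (u j) (by
      ext i
      simp only [Pi.add_apply, Pi.smul_apply, smul_eq_mul, Pi.zero_apply]
      fin_cases i <;> fin_cases j <;> simp only [Fin.zero_eta, Fin.mk_one, Fin.reduceFinMk] <;>
        grind)
    exact h1.2
  have h2 := LinearIndependent.pair_iff.1 h 1 0 (by ext i; simp [hu i])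
  exact one_ne_zero h2.1

/-- If `u` and `v` are orthogonal to `g`, then `u × v` and `g` are proportional, in the sense that
the `2 × 2` minors of the pair vanish. -/
lemma crossProduct_mul_comm {A : Type*} [CommRing A] {u v g : Fin 3 → A}
    (hu : ∑ i, u i * g i = 0) (hv : ∑ i, v i * g i = 0) (i j : Fin 3) :
    crossProduct u v i * g j = crossProduct u v j * g i := by
  rw [cross_apply]
  simp only [Fin.sum_univ_three] at hu hv
  fin_cases i <;> fin_cases j <;>
    simp only [Fin.zero_eta, Fin.mk_one, Fin.reduceFinMk, Matrix.cons_val] <;> grind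

lemma crossProduct_isHomogeneous {d₁ d₂ : ℕ} {e₁ e₂ : Fin 3 → MvPolynomial (Fin 3) ℂ}
    (he₁ : ∀ i, (e₁ i).IsHomogeneous d₁) (he₂ : ∀ i, (e₂ i).IsHomogeneous d₂) (i : Fin 3) :
    (crossProduct e₁ e₂ i).IsHomogeneous (d₁ + d₂) := by
  rw [cross_apply]
  fin_cases i <;> exact ((he₁ _).mul (he₂ _)).sub ((he₁ _).mul (he₂ _))

/-- For a reduced plane curve `V(f)` of degree `d` whose Jacobian syzygy module is free
with a homogeneous basis in degrees `d₁ ≤ d₂`, one has `d₁ + d₂ = d − 1` and the total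
Tjurina number (the degree of the Jacobian scheme, i.e. the eventually constant value of
the Hilbert function of `R/J_f`) equals `(d−1)² − d₁d₂`. -/
theorem free_curve_exponents_and_tjurina
    (d d₁ d₂ : ℕ) (h12 : d₁ ≤ d₂)
    (f : MvPolynomial (Fin 3) ℂ) (hf : f.IsHomogeneous d) (hred : Squarefree f)
    (e₁ e₂ : Fin 3 → MvPolynomial (Fin 3) ℂ)
    (he₁ : ∀ i, (e₁ i).IsHomogeneous d₁) (he₂ : ∀ i, (e₂ i).IsHomogeneous d₂)
    (hs₁ : ∑ i : Fin 3, e₁ i * pderiv i f = 0)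
    (hs₂ : ∑ i : Fin 3, e₂ i * pderiv i f = 0)
    (hgen : ∀ v : Fin 3 → MvPolynomial (Fin 3) ℂ,
      (∑ i : Fin 3, v i * pderiv i f = 0) →
        ∃ p q : MvPolynomial (Fin 3) ℂ, v = fun i => p * e₁ i + q * e₂ i)
    (hindep : LinearIndependent (MvPolynomial (Fin 3) ℂ) ![e₁, e₂]) :
    d₁ + d₂ = d - 1 ∧
      ∃ N : ℕ, ∀ t : ℕ, N ≤ t →
        Module.finrank ℂ (homogeneousSubmodule (Fin 3) ℂ t) =
          Module.finrank ℂ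
            ((Ideal.span {pderiv 0 f, pderiv 1 f, pderiv 2 f}).restrictScalars ℂ ⊓
              homogeneousSubmodule (Fin 3) ℂ t : Submodule ℂ (MvPolynomial (Fin 3) ℂ)) +
          ((d - 1) ^ 2 - d₁ * d₂) := by
  have hg : ∀ i, (pderiv i f).IsHomogeneous (d - 1) := fun i => hf.pderiv
  obtain ⟨i, hi⟩ : ∃ i, crossProduct e₁ e₂ i ≠ 0 :=
    Function.ne_iff.1 (crossProduct_ne_zero hindep)
  -- If the gradient vanished, every vector would be a syzygy, hence in the span of `e₁` and `e₂`,
  -- hence orthogonal to `e₁ × e₂ ≠ 0`.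
  have hex : ∃ i, pderiv i f ≠ 0 := by
    by_contra! h0
    obtain ⟨p, q, hpq⟩ := hgen (Pi.single i 1) (by simp [h0])
    have h1 : ∀ j, (Pi.single i 1 : Fin 3 → MvPolynomial (Fin 3) ℂ) j = p * e₁ j + q * e₂ j :=
      fun j => congrFun hpq j
    have h2 : ∑ j, crossProduct e₁ e₂ j * (Pi.single i 1 : Fin 3 → MvPolynomial (Fin 3) ℂ) j
        = 0 := by
      simp only [h1, Fin.sum_univ_three, cross_apply, Matrix.cons_val]
      ring
    exact hi (by simpa [Pi.single_apply] using h2)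
  have hd : d ≠ 0 := by
    rintro rfl
    obtain ⟨j, hj⟩ := hex
    apply hj
    rw [← totalDegree_zero_iff_isHomogeneous, totalDegree_eq_zero_iff_eq_C] at hf
    rw [hf, pderiv_C]
  have hle : d - 1 ≤ d₁ + d₂ := by
    have hdvd : pderiv i f ∣ crossProduct e₁ e₂ i :=
      dvd_of_forall_dvd_mul hex (fun p hp => not_forall_dvd_pderiv hd hf hred hp)
        fun j => ⟨crossProduct e₁ e₂ j, by
          rw [mul_comm (pderiv i f)]
          exact crossProduct_mul_comm (g := fun i => pderiv i f) hs₁ hs₂ i j⟩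
    obtain ⟨c, hc⟩ := hdvd
    have hi0 := hi
    rw [hc] at hi0
    have h1 := totalDegree_mul_of_isDomain (left_ne_zero_of_mul hi0) (right_ne_zero_of_mul hi0)
    rw [← hc, (crossProduct_isHomogeneous he₁ he₂ i).totalDegree hi,
      (hg i).totalDegree (left_ne_zero_of_mul hi0)] at h1
    omega
  have key : ∀ u : ℕ, _ := fun u =>
    finrank_jacobian (g := fun i => pderiv i f) (n := d₁ + d₂ + u) (a := d₂ + u) (b := d₁ + u)
      hg he₁ he₂ (by ring) (by ring) hs₁ hs₂ hgen hindep
  generalize d - 1 = s at *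
  have hge : d₁ + d₂ ≤ s := by
    by_contra! hlt
    -- In degree `d₁ + d₂ + u + s` twice the Hilbert function of `R/J_f` is
    -- `2 (d₁ + d₂ + u) (s - d₁ - d₂) + s² + d₁² + d₂² + 3 (s - d₁ - d₂)`; if `s < d₁ + d₂`,
    -- this is negative for the following `u`.
    obtain ⟨u, hu⟩ : ∃ u, u = s ^ 2 + (d₁ + d₂) ^ 2 := ⟨_, rfl⟩
    have k1 := key u
    have k2 := two_mul_finrank_homogeneousSubmodule (d₁ + d₂ + u + s)
    have k3 := Submodule.finrank_mono (inf_le_right :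
      (Ideal.span {pderiv 0 f, pderiv 1 f, pderiv 2 f}).restrictScalars ℂ ⊓
        homogeneousSubmodule (Fin 3) ℂ (d₁ + d₂ + u + s) ≤ _)
    have k4 : 3 * ((d₁ + d₂ + u + 1) * (d₁ + d₂ + u + 2)) ≤
        (d₁ + d₂ + u + s + 1) * (d₁ + d₂ + u + s + 2) +
          ((d₂ + u + 1) * (d₂ + u + 2) + (d₁ + u + 1) * (d₁ + u + 2)) := by
      omega
    have k5 : (d₁ + d₂ + u) * (s + 1) ≤ (d₁ + d₂ + u) * (d₁ + d₂) := Nat.mul_le_mul_left _ hlt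
    nlinarith [Nat.zero_le (d₁ * d₂)]
  have hsum : d₁ + d₂ = s := le_antisymm hge hle
  refine ⟨hsum, s + s, fun t ht => ?_⟩
  obtain ⟨u, rfl⟩ := Nat.exists_eq_add_of_le ht
  have k1 := key u
  have k2 := two_mul_finrank_homogeneousSubmodule (s + s + u)
  obtain ⟨m, hm⟩ : ∃ m, s ^ 2 - d₁ * d₂ = m := ⟨_, rfl⟩
  have hm' : s ^ 2 = m + d₁ * d₂ := by
    have : d₁ * d₂ ≤ s ^ 2 := by rw [← hsum]; nlinarith
    omega
  rw [hm]
  rw [hsum, show s + u + s = s + s + u by ring] at k1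
  subst hsum
  nlinarith
end

section
/- Let f ∈ ℂ[x₀,x₁,x₂] be a reduced homogeneous polynomial of degree d whose Jacobian ideal J_f has a minimal free resolution 0 → R(−d−d₂) → R(1−d−d₁) ⊕ R(1−d−d₂)² → R(1−d)³ → J_f → 0 (a nearly free curve with exponents d₁ ≤ d₂). Then d₁ + d₂ = d and the total Tjurina number is τ(C) = (d−1)² − d₁(d₂ − 1) − 1. -/
/-!
Write `F` for the gradient of `f` and `C₀, C₁, C₂` for the columns of `M`.

**The exponents.** Euler's formula and squarefreeness of `f` show that the entries of `F` have no
common irreducible factor (`primitive_gradient`); the entries of `P` have none either, since `P`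
generates the kernel of `M` (`primitive_of_kernel`). The cross product of two syzygies of `F` is
parallel to `F`, hence a polynomial multiple of it, and `M P = 0` forces the three multipliers of
`C₁ × C₂, C₂ × C₀, C₀ × C₁` to be `s P₀, s P₁, s P₂` for a common `s`. The Koszul syzygies of `F`
are combinations of the columns of `M`, and their cross products have the squares `Fᵢ²` among their
entries, so `s` divides each `Fᵢ²` and is therefore a unit (`minors_eq_unit_smul`). Comparing
degrees in `Cᵢ × Cⱼ = s Pₖ F` gives `d₁ + d₂ = d` (`exponents_add`).

**The Tjurina number.** Passing to homogeneous components, the resolution is exact in each degree,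
and rank-nullity along it expresses the Hilbert function of `J_f` through the numbers
`dim R_n = (n + 2).choose 2` (`hilbert_count`). Substituting `d = d₁ + d₂`, the Hilbert function of
`R / J_f` becomes the stated constant.
-/

open MvPolynomial

namespace NearlyFree

/-! ### Syzygies of a primitive vector over a factorial domain -/

section UFD
variable {A : Type*} [CommRing A] [IsDomain A] [UniqueFactorizationMonoid A]

/-- The entries of `F` have no common irreducible factor. In a ring without irreducible elements
this is vacuous, so `F ≠ 0` is a separate hypothesis where it is needed. -/
def Primitive (F : Fin 3 → A) : Prop := ∀ p : A, Irreducible p → ∃ j, ¬ p ∣ F j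

/-- Gauss-type cancellation: `a` divides `w` once it divides all `Fⱼ w`, by peeling off the prime
factors of `a` one at a time. -/
lemma Primitive.dvd {F : Fin 3 → A} (hF : Primitive F) (hF0 : F ≠ 0) (a : A) :
    ∀ w, (∀ j, a ∣ F j * w) → a ∣ w := by
  induction a using UniqueFactorizationMonoid.induction_on_prime with
  | h₁ =>
    intro w h
    obtain ⟨j, hj⟩ := Function.ne_iff.1 hF0
    have := zero_dvd_iff.1 (h j)
    rw [(mul_eq_zero.1 this).resolve_left hj]
  | h₂ x hx => exact fun w _ => hx.dvd
  | h₃ a p _ hp ih =>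
    intro w h
    obtain ⟨j, hj⟩ := hF p hp.irreducible
    obtain ⟨w', rfl⟩ := (hp.dvd_or_dvd ((dvd_mul_right p a).trans (h j))).resolve_left hj
    refine mul_dvd_mul_left p (ih w' fun k => ?_)
    have := h k
    rw [mul_left_comm] at this
    exact (mul_dvd_mul_iff_left hp.ne_zero).1 this

lemma Primitive.eq_smul {F : Fin 3 → A} (hF : Primitive F) (hF0 : F ≠ 0) {w : Fin 3 → A}
    (h : ∀ i j, F i * w j = F j * w i) : ∃ q : A, w = q • F := by
  obtain ⟨i, hi⟩ := Function.ne_iff.1 hF0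
  obtain ⟨q, hq⟩ := hF.dvd hF0 (F i) (w i) fun j => ⟨w j, (h i j).symm⟩
  refine ⟨q, funext fun j => mul_left_cancel₀ hi ?_⟩
  rw [h i j, hq, Pi.smul_apply, smul_eq_mul]
  ring

lemma Primitive.cross_eq_smul {F : Fin 3 → A} (hF : Primitive F) (hF0 : F ≠ 0) {u v : Fin 3 → A}
    (hu : ∑ i, u i * F i = 0) (hv : ∑ i, v i * F i = 0) :
    ∃ q : A, crossProduct u v = q • F := by
  refine hF.eq_smul hF0 ?_
  simp only [Fin.sum_univ_three] at hu hv
  simp only [Fin.forall_fin_succ, cross_apply]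
  simp
  refine ⟨⟨?_, ?_⟩, ⟨?_, ?_⟩, ?_, ?_⟩
  · linear_combination u 2 * hv - v 2 * hu
  · linear_combination - u 1 * hv + v 1 * hu
  · linear_combination - u 2 * hv + v 2 * hu
  · linear_combination u 0 * hv - v 0 * hu
  · linear_combination u 1 * hv - v 1 * hu
  · linear_combination - u 0 * hv + v 0 * hu

/-- If the columns of `M` generate the syzygies of `F` and `M P = 0`, with `F` and `P` primitive,
then up to one common unit the 2 × 2 minors of `M` are the products `Pₖ Fᵢ`. -/
theorem minors_eq_unit_smul {F P : Fin 3 → A} {M : Fin 3 → Fin 3 → A}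
    (hF : Primitive F) (hF0 : F ≠ 0) (hP : Primitive P) (hP0 : P ≠ 0)
    (hMsyz : ∀ j, ∑ i, M i j * F i = 0)
    (hMgen : ∀ v : Fin 3 → A, ∑ i, v i * F i = 0 →
      ∃ c : Fin 3 → A, ∀ i, v i = ∑ j, M i j * c j)
    (hMP : ∀ i, ∑ j, M i j * P j = 0) :
    ∃ s : A, IsUnit s ∧
      crossProduct (fun i => M i 1) (fun i => M i 2) = (s * P 0) • F ∧
      crossProduct (fun i => M i 2) (fun i => M i 0) = (s * P 1) • F ∧
      crossProduct (fun i => M i 0) (fun i => M i 1) = (s * P 2) • F := by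
  obtain ⟨q0, h0⟩ := hF.cross_eq_smul hF0 (hMsyz 1) (hMsyz 2)
  obtain ⟨q1, h1⟩ := hF.cross_eq_smul hF0 (hMsyz 2) (hMsyz 0)
  obtain ⟨q2, h2⟩ := hF.cross_eq_smul hF0 (hMsyz 0) (hMsyz 1)
  have e0 := fun i => congrFun h0 i
  have e1 := fun i => congrFun h1 i
  have e2 := fun i => congrFun h2 i
  simp only [Fin.forall_fin_succ, cross_apply, Pi.smul_apply, smul_eq_mul] at e0 e1 e2
  simp at e0 e1 e2
  obtain ⟨a0, a1, a2⟩ := e0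
  obtain ⟨b0, b1, b2⟩ := e1
  obtain ⟨c0, c1, c2⟩ := e2
  simp only [Fin.sum_univ_three] at hMP
  have m0 := hMP 0
  have m1 := hMP 1
  have m2 := hMP 2
  obtain ⟨k, hk⟩ := Function.ne_iff.1 hF0
  obtain ⟨s, hs⟩ : ∃ s : A, ![q0, q1, q2] = s • P := by
    refine hP.eq_smul hP0 fun i j => mul_right_cancel₀ hk ?_
    have hk3 : k = 0 ∨ k = 1 ∨ k = 2 := by fin_cases k <;> simp
    clear hk
    -- Each identity is checked after multiplication by `F k ≠ 0`, from the two rows other than `k`.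
    have t01 : P 0 * q1 * F k = P 1 * q0 * F k := by
      obtain rfl | rfl | rfl := hk3
      · linear_combination M 1 2 * m2 - M 2 2 * m1 - P 0 * b0 + P 1 * a0
      · linear_combination M 2 2 * m0 - M 0 2 * m2 - P 0 * b1 + P 1 * a1
      · linear_combination M 0 2 * m1 - M 1 2 * m0 - P 0 * b2 + P 1 * a2
    have t12 : P 1 * q2 * F k = P 2 * q1 * F k := by
      obtain rfl | rfl | rfl := hk3
      · linear_combination M 1 0 * m2 - M 2 0 * m1 - P 1 * c0 + P 2 * b0
      · linear_combination M 2 0 * m0 - M 0 0 * m2 - P 1 * c1 + P 2 * b1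
      · linear_combination M 0 0 * m1 - M 1 0 * m0 - P 1 * c2 + P 2 * b2
    have t20 : P 2 * q0 * F k = P 0 * q2 * F k := by
      obtain rfl | rfl | rfl := hk3
      · linear_combination M 1 1 * m2 - M 2 1 * m1 - P 2 * a0 + P 0 * c0
      · linear_combination M 2 1 * m0 - M 0 1 * m2 - P 2 * a1 + P 0 * c1
      · linear_combination M 0 1 * m1 - M 1 1 * m0 - P 2 * a2 + P 0 * c2
    fin_cases i <;> fin_cases j
    exacts [rfl, t01, t20.symm, t01.symm, rfl, t12, t20, t12.symm, rfl]
  have s0 : q0 = s * P 0 := congrFun hs 0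
  have s1 : q1 = s * P 1 := congrFun hs 1
  have s2 : q2 = s * P 2 := congrFun hs 2
  refine ⟨s, ?_, s0 ▸ h0, s1 ▸ h1, s2 ▸ h2⟩
  have hdvd : ∀ i, s ∣ F i * F i := by
    -- The Koszul syzygies, written in terms of the columns of `M`.
    obtain ⟨x, hx⟩ := hMgen ![F 1, -F 0, 0] (by simp [Fin.sum_univ_three]; ring)
    obtain ⟨y, hy⟩ := hMgen ![F 2, 0, -F 0] (by simp [Fin.sum_univ_three]; ring)
    obtain ⟨z, hz⟩ := hMgen ![0, F 2, -F 1] (by simp [Fin.sum_univ_three]; ring)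
    have hx0 := hx 0
    have hx1 := hx 1
    have hx2 := hx 2
    have hy0 := hy 0
    have hy1 := hy 1
    have hy2 := hy 2
    have hz0 := hz 0
    have hz1 := hz 1
    have hz2 := hz 2
    simp [Fin.sum_univ_three] at hx0 hx1 hx2 hy0 hy1 hy2 hz0 hz1 hz2
    subst s0 s1 s2
    -- `U x` is `M x`, and `U x × U y = (s * K x y) • F` by bilinearity of the cross product.
    set U := fun (x : Fin 3 → A) i => M i 0 * x 0 + M i 1 * x 1 + M i 2 * x 2 with hU
    set K := fun x y : Fin 3 → A => P 0 * (x 1 * y 2 - x 2 * y 1) +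
      P 1 * (x 2 * y 0 - x 0 * y 2) + P 2 * (x 0 * y 1 - x 1 * y 0) with hK
    have k0 : ∀ x y, U x 1 * U y 2 - U x 2 * U y 1 = s * (K x y * F 0) := fun x y => by
      simp only [hU, hK]
      linear_combination (x 1 * y 2 - x 2 * y 1) * a0 + (x 2 * y 0 - x 0 * y 2) * b0 +
        (x 0 * y 1 - x 1 * y 0) * c0
    have k1 : ∀ x y, U x 2 * U y 0 - U x 0 * U y 2 = s * (K x y * F 1) := fun x y => by
      simp only [hU, hK]
      linear_combination (x 1 * y 2 - x 2 * y 1) * a1 + (x 2 * y 0 - x 0 * y 2) * b1 +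
        (x 0 * y 1 - x 1 * y 0) * c1
    have k2 : ∀ x y, U x 0 * U y 1 - U x 1 * U y 0 = s * (K x y * F 2) := fun x y => by
      simp only [hU, hK]
      linear_combination (x 1 * y 2 - x 2 * y 1) * a2 + (x 2 * y 0 - x 0 * y 2) * b2 +
        (x 0 * y 1 - x 1 * y 0) * c2
    intro i
    fin_cases i
    · refine ⟨_, Eq.trans ?_ (k0 x y)⟩
      change F 0 * F 0 = _
      simp only [hU, ← hx1, ← hx2, ← hy1, ← hy2]
      ring
    · refine ⟨_, Eq.trans ?_ (k1 x z)⟩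
      change F 1 * F 1 = _
      simp only [hU, ← hx2, ← hx0, ← hz2, ← hz0]
      ring
    · refine ⟨_, Eq.trans ?_ (k2 y z)⟩
      change F 2 * F 2 = _
      simp only [hU, ← hy0, ← hy1, ← hz0, ← hz1]
      ring
  by_contra hsu
  obtain ⟨p, hp, hps⟩ : ∃ p, Irreducible p ∧ p ∣ s := by
    refine WfDvdMonoid.exists_irreducible_factor hsu ?_
    rintro rfl
    exact hk (mul_self_eq_zero.1 (zero_dvd_iff.1 (hdvd k)))
  obtain ⟨j, hj⟩ := hF p hp
  exact hj (or_self_iff.1 (hp.prime.dvd_or_dvd (hps.trans (hdvd j))))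

end UFD
/-! ### Polynomials: the gradient of a squarefree form, homogeneous components -/

section Poly
variable {σ K : Type*} [Field K]

lemma totalDegree_pderiv_lt {p : MvPolynomial σ K} {i : σ} (h : pderiv i p ≠ 0) :
    (pderiv i p).totalDegree < p.totalDegree := by
  have key : ∀ m ∈ (pderiv i p).support, m.degree + 1 ≤ p.totalDegree := by
    intro m hm
    rw [mem_support_iff, coeff_pderiv] at hm
    have := le_totalDegree (mem_support_iff.2 (left_ne_zero_of_mul hm))
    change (m + Finsupp.single i 1).degree ≤ _ at this
    simpa using this
  obtain ⟨m, hm⟩ := support_nonempty.2 h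
  refine (Finset.sup_lt_iff (lt_of_lt_of_le (Nat.succ_pos _) (key m hm))).2 fun m hm => key m hm

lemma exists_not_dvd_pderiv [CharZero K] {p : MvPolynomial σ K} (hp : Irreducible p) :
    ∃ i, ¬ p ∣ pderiv i p := by
  by_contra! hall
  classical
  have hz : ∀ i, pderiv i p = 0 := by
    intro i
    by_contra h
    obtain ⟨q, hq⟩ := hall i
    have hq0 : q ≠ 0 := by rintro rfl; simp [hq] at h
    have := totalDegree_pderiv_lt h
    rw [hq, totalDegree_mul_of_isDomain hp.ne_zero hq0] at this
    omega
  have hC : p = C (coeff 0 p) := by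
    ext n
    rw [coeff_C]
    split_ifs with h0
    · rw [h0]
    · obtain ⟨i, hi⟩ := Finsupp.ne_iff.1 (Ne.symm h0)
      have := congrArg (coeff (n - Finsupp.single i 1)) (hz i)
      rw [coeff_pderiv, coeff_zero, tsub_add_cancel_of_le
        (Finsupp.single_le_iff.2 (Nat.one_le_iff_ne_zero.2 hi))] at this
      exact (mul_eq_zero.1 this).resolve_right (Nat.cast_add_one_ne_zero _)
  refine hp.not_isUnit ?_
  rw [hC]
  refine (IsUnit.mk0 _ fun h => hp.ne_zero ?_).map C
  rw [hC, h, C_0]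

lemma primitive_gradient {K : Type*} [Field K] [CharZero K] {f : MvPolynomial (Fin 3) K} {d : ℕ}
    (hf : f.IsHomogeneous d) (hd : d ≠ 0)
    (hred : Squarefree f) : Primitive fun i => pderiv i f := by
  intro p hp
  by_contra! hall
  have hpf : p ∣ f := by
    have h1 : p ∣ d • f := by
      rw [← hf.sum_X_mul_pderiv]
      exact Finset.dvd_sum fun i _ => (hall i).mul_left _
    rw [nsmul_eq_mul, ← map_natCast C] at h1
    exact ((IsUnit.mk0 (d : K) (by exact_mod_cast hd)).map C).dvd_mul_left.1 h1
  obtain ⟨g, rfl⟩ := hpf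
  obtain ⟨i, hi⟩ := exists_not_dvd_pderiv hp
  have h2 : p ∣ pderiv i p * g := by
    have := hall i
    rwa [pderiv_mul, dvd_add_left (dvd_mul_right _ _)] at this
  have hpg : p ∣ g := (hp.prime.dvd_or_dvd h2).resolve_left hi
  exact hp.not_isUnit (hred p (mul_dvd_mul_left p hpg))

lemma homogeneousComponent_mul {b : MvPolynomial σ K} {m n t : ℕ} (hb : b.IsHomogeneous m)
    (ht : m + n = t) (a : MvPolynomial σ K) :
    homogeneousComponent t (b * a) = b * homogeneousComponent n a := by
  conv_lhs => rw [← sum_homogeneousComponent a, Finset.mul_sum, map_sum]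
  have : ∀ i, homogeneousComponent t (b * homogeneousComponent i a) =
      if i = n then b * homogeneousComponent n a else 0 := by
    intro i
    rw [homogeneousComponent_of_mem
      (hb.mul (homogeneousComponent_isHomogeneous i a))]
    by_cases h : i = n
    · subst h; simp [ht]
    · rw [if_neg h, if_neg (by omega)]
  simp only [this, Finset.sum_ite_eq', Finset.mem_range]
  split_ifs with h
  · rfl
  · rw [homogeneousComponent_eq_zero _ _ (by omega), mul_zero]

/-- A homogeneous combination of the columns of a matrix with homogeneous columns can be written
with homogeneous coefficients of the expected degrees. -/
lemma exists_homogeneous_coeffs {ι κ : Type*} [Fintype κ]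
    {N : ι → κ → MvPolynomial σ K}
    {e n : κ → ℕ} {t : ℕ}
    (hN : ∀ i j, (N i j).IsHomogeneous (e j)) (hn : ∀ j, e j + n j = t)
    {w : ι → MvPolynomial σ K} (hw : ∀ i, (w i).IsHomogeneous t)
    {c : κ → MvPolynomial σ K} (hc : ∀ i, w i = ∑ j, N i j * c j) :
    ∃ c' : κ → MvPolynomial σ K, (∀ j, (c' j).IsHomogeneous (n j)) ∧
      ∀ i, w i = ∑ j, N i j * c' j := by
  refine ⟨fun j => homogeneousComponent (n j) (c j),
    fun j => homogeneousComponent_isHomogeneous _ _, fun i => ?_⟩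
  conv_lhs => rw [← homogeneousComponent_eq_self (hw i), hc i, map_sum]
  exact Finset.sum_congr rfl fun j _ => homogeneousComponent_mul (hN i j) (hn j) _

instance (n : ℕ) : FiniteDimensional K (homogeneousSubmodule (Fin 3) K n) :=
  Module.Finite.iff_fg.2 (homogeneousSubmodule_fg _ _ n)

lemma finrank_homogeneousSubmodule (n : ℕ) :
    Module.finrank K (homogeneousSubmodule (Fin 3) K n) = (n + 2).choose 2 := by
  rw [homogeneousSubmodule_eq_finsupp_supported,
    (AddMonoidAlgebra.supportedEquivFinsupp _).finrank_eq]
  have hs : {d : Fin 3 →₀ ℕ | d.degree = n} =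
      (Finset.finsuppAntidiag (Finset.univ : Finset (Fin 3)) n : Set (Fin 3 →₀ ℕ)) := by
    ext d
    simp [Finset.mem_finsuppAntidiag, Finsupp.degree_eq_sum]
  rw [hs, Module.finrank_finsupp_self]
  simp only [Finset.coe_sort_coe, Fintype.card_coe]
  rw [Finset.card_finsuppAntidiag_nat_eq_choose]
  simp only [Finset.card_univ, Fintype.card_fin]
  rw [show 3 + n - 1 = n + 2 by omega, Nat.choose_symm_add]

end Poly

/-! ### Dimension counts -/

section LinAlg
variable {K V W : Type*} [Field K] [AddCommGroup V] [Module K V] [AddCommGroup W] [Module K W]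

lemma finrank_map_add_inf_ker (L : V →ₗ[K] W) (S : Submodule K V) [FiniteDimensional K S] :
    Module.finrank K (S.map L) + Module.finrank K (S ⊓ LinearMap.ker L : Submodule K V) =
      Module.finrank K S := by
  rw [← (L.domRestrict S).finrank_range_add_finrank_ker, LinearMap.range_domRestrict,
    LinearMap.ker_domRestrict, ← Submodule.map_comap_subtype, Submodule.finrank_map_subtype_eq]

/-- A product of submodules, seen inside the product of the ambient modules. -/
def piEquiv {ι : Type*} (p : ι → Submodule K V) :
    Submodule.pi Set.univ p ≃ₗ[K] ∀ i, p i where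
  toFun x i := ⟨x.1 i, x.2 i trivial⟩
  invFun y := ⟨fun i => y i, fun i _ => (y i).2⟩
  map_add' _ _ := rfl
  map_smul' _ _ := rfl
  left_inv _ := rfl
  right_inv _ := rfl

instance {ι : Type*} [Finite ι] (p : ι → Submodule K V) [∀ i, FiniteDimensional K (p i)] :
    FiniteDimensional K (Submodule.pi Set.univ p) :=
  Module.Finite.equiv (piEquiv p).symm

lemma finrank_pi {ι : Type*} [Fintype ι] (p : ι → Submodule K V)
    [∀ i, FiniteDimensional K (p i)] :
    Module.finrank K (Submodule.pi Set.univ p) = ∑ i, Module.finrank K (p i) := by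
  rw [(piEquiv p).finrank_eq, Module.finrank_pi_fintype]

end LinAlg
/-! ### Exponents and Hilbert function from the resolution -/

section Assembly

/-- If `P = p Q`, then `Q` also lies in the kernel of `M`, hence `Q = u P` and `p u = 1`. -/
lemma primitive_of_kernel {A : Type*} [CommRing A] [IsDomain A] {P : Fin 3 → A}
    {M : Fin 3 → Fin 3 → A} (hP0 : P ≠ 0)
    (hMP : ∀ i, ∑ j, M i j * P j = 0)
    (hker : ∀ c : Fin 3 → A, (∀ i, ∑ j, M i j * c j = 0) → ∃ q : A, ∀ j, c j = q * P j) :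
    Primitive P := by
  intro p hp
  by_contra! hall
  choose P' hP' using hall
  obtain ⟨u, hu⟩ := hker P' fun i => by
    refine (mul_eq_zero.1 ?_).resolve_left hp.ne_zero
    rw [Finset.mul_sum, ← hMP i]
    refine Finset.sum_congr rfl fun j _ => ?_
    rw [hP' j]
    ring
  obtain ⟨j, hj⟩ := Function.ne_iff.1 hP0
  refine hp.not_isUnit (IsUnit.of_mul_eq_one u (mul_right_cancel₀ hj ?_))
  rw [one_mul, mul_assoc, ← hu j, ← hP' j]

/-- A surjective endomorphism of a free module of finite rank is injective. -/
lemma eq_zero_of_generate_all {A : Type*} [CommRing A] {P : Fin 3 → A} {M : Fin 3 → Fin 3 → A}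
    (hMgen : ∀ v : Fin 3 → A, ∃ c : Fin 3 → A, ∀ i, v i = ∑ j, M i j * c j)
    (hMP : ∀ i, ∑ j, M i j * P j = 0) : P = 0 := by
  choose B hB using fun k => hMgen (Pi.single k 1)
  have h1 : Matrix.of M * (Matrix.of B).transpose = 1 := by
    ext i k
    rw [Matrix.mul_apply, Matrix.one_apply, ← Pi.single_apply, hB k i]
    rfl
  have h2 : (Matrix.of M).mulVec P = 0 := funext hMP
  rw [← Matrix.one_mulVec P, ← mul_eq_one_comm.1 h1, ← Matrix.mulVec_mulVec, h2,
    Matrix.mulVec_zero]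

/-- Comparison of degrees in `Cᵢ × Cⱼ = s Pₖ F` for an index `k` with `Pₖ ≠ 0`. -/
lemma exponents_add {K : Type*} [Field K] {d d₁ d₂ : ℕ} (h12 : d₁ ≤ d₂) (hd : d ≠ 0)
    {F P : Fin 3 → MvPolynomial (Fin 3) K} {M : Fin 3 → Fin 3 → MvPolynomial (Fin 3) K}
    (hF : Primitive F) (hP : Primitive P) (hP0 : P ≠ 0)
    (hFh : ∀ i, (F i).IsHomogeneous (d - 1))
    (hM0 : ∀ i, (M i 0).IsHomogeneous d₁)
    (hM1 : ∀ i, (M i 1).IsHomogeneous d₂)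
    (hM2 : ∀ i, (M i 2).IsHomogeneous d₂)
    (hP0h : (P 0).IsHomogeneous (d₂ - d₁ + 1))
    (hP1h : (P 1).IsHomogeneous 1) (hP2h : (P 2).IsHomogeneous 1)
    (hMsyz : ∀ j, ∑ i, M i j * F i = 0)
    (hMgen : ∀ v : Fin 3 → MvPolynomial (Fin 3) K, ∑ i, v i * F i = 0 →
      ∃ c : Fin 3 → MvPolynomial (Fin 3) K, ∀ i, v i = ∑ j, M i j * c j)
    (hMP : ∀ i, ∑ j, M i j * P j = 0) : d₁ + d₂ = d := by
  have hF0 : F ≠ 0 := by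
    rintro rfl
    obtain ⟨j, hj⟩ := hF (X 0) (X_prime (R := K)).irreducible
    exact hj (dvd_zero _)
  obtain ⟨s, hs, h0, h1, h2⟩ := minors_eq_unit_smul hF hF0 hP hP0 hMsyz hMgen hMP
  have hsh : s.IsHomogeneous 0 := by
    obtain ⟨r, -, rfl⟩ := isUnit_iff_eq_C_of_isReduced.1 hs
    exact isHomogeneous_C _ _
  obtain ⟨i, hi⟩ := Function.ne_iff.1 hF0
  obtain ⟨k, hk⟩ := Function.ne_iff.1 hP0
  have cross : ∀ {u v : Fin 3 → MvPolynomial (Fin 3) K} {a b : ℕ},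
      (∀ i, (u i).IsHomogeneous a) → (∀ i, (v i).IsHomogeneous b) →
      (crossProduct u v i).IsHomogeneous (a + b) := by
    intro u v a b hu hv
    rw [cross_apply]
    fin_cases i
    all_goals exact ((hu _).mul (hv _)).sub ((hu _).mul (hv _))
  have count : ∀ {u v : Fin 3 → MvPolynomial (Fin 3) K} {a b e : ℕ},
      (∀ i, (u i).IsHomogeneous a) → (∀ i, (v i).IsHomogeneous b) → (P k).IsHomogeneous e →
      crossProduct u v = (s * P k) • F → a + b = 0 + e + (d - 1) := by
    intro u v a b e hu hv he h
    refine (cross hu hv).inj_right (h ▸ (hsh.mul he).mul (hFh i)) ?_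
    rw [h]
    exact mul_ne_zero (mul_ne_zero hs.ne_zero hk) hi
  obtain rfl | rfl | rfl : k = 0 ∨ k = 1 ∨ k = 2 := by clear hk count; fin_cases k <;> simp
  · have := count hM1 hM2 hP0h h0
    omega
  · have := count hM2 hM0 hP1h h1
    omega
  · have := count hM0 hM1 hP2h h2
    omega

/-- The alternating sum of dimensions in degree `t + m` of
`0 → R(−d₂−1) → R(−d₁) ⊕ R(−d₂)² → R³ → J(m) → 0`, where `J` is generated by three forms of
degree `m`. The bound on `t` keeps all the subtractions of degrees from truncating. -/
lemma hilbert_count {K : Type*} [Field K] {m d₁ d₂ t : ℕ} (h12 : d₁ ≤ d₂) (ht : d₂ + 1 ≤ t)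
    {F P : Fin 3 → MvPolynomial (Fin 3) K} {M : Fin 3 → Fin 3 → MvPolynomial (Fin 3) K}
    (hP0 : P ≠ 0)
    (hFh : ∀ i, (F i).IsHomogeneous m)
    (hM0 : ∀ i, (M i 0).IsHomogeneous d₁)
    (hM1 : ∀ i, (M i 1).IsHomogeneous d₂)
    (hM2 : ∀ i, (M i 2).IsHomogeneous d₂)
    (hP0h : (P 0).IsHomogeneous (d₂ - d₁ + 1))
    (hP1h : (P 1).IsHomogeneous 1) (hP2h : (P 2).IsHomogeneous 1)
    (hMsyz : ∀ j, ∑ i, M i j * F i = 0)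
    (hMgen : ∀ v : Fin 3 → MvPolynomial (Fin 3) K, ∑ i, v i * F i = 0 →
      ∃ c : Fin 3 → MvPolynomial (Fin 3) K, ∀ i, v i = ∑ j, M i j * c j)
    (hMP : ∀ i, ∑ j, M i j * P j = 0)
    (hker : ∀ c : Fin 3 → MvPolynomial (Fin 3) K, (∀ i, ∑ j, M i j * c j = 0) →
      ∃ q : MvPolynomial (Fin 3) K, ∀ j, c j = q * P j) :
    Module.finrank K ((Ideal.span {F 0, F 1, F 2}).restrictScalars K ⊓
        homogeneousSubmodule (Fin 3) K (t + m) : Submodule K (MvPolynomial (Fin 3) K)) +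
      ((t - d₁ + 2).choose 2 + 2 * (t - d₂ + 2).choose 2) =
    3 * (t + 2).choose 2 + (t - (d₂ + 1) + 2).choose 2 := by
  let e : Fin 3 → ℕ := ![d₁, d₂, d₂]
  let g : Fin 3 → ℕ := ![d₂ - d₁ + 1, 1, 1]
  have hMh : ∀ i j, (M i j).IsHomogeneous (e j) := by
    intro i j
    fin_cases j
    exacts [hM0 i, hM1 i, hM2 i]
  have hPh : ∀ j, (P j).IsHomogeneous (g j) := by
    intro j
    fin_cases j
    exacts [hP0h, hP1h, hP2h]
  have hte : ∀ j, e j + (t - e j) = t := by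
    intro j
    fin_cases j <;> simp [e] <;> omega
  have hge : ∀ j, g j + (t - (d₂ + 1)) = t - e j := by
    intro j
    fin_cases j <;> simp [e, g] <;> omega
  -- The three maps of the resolution.
  let L₀ : (Fin 3 → MvPolynomial (Fin 3) K) →ₗ[K] MvPolynomial (Fin 3) K :=
    (Fintype.linearCombination (MvPolynomial (Fin 3) K) F).restrictScalars K
  let L₁ : (Fin 3 → MvPolynomial (Fin 3) K) →ₗ[K] (Fin 3 → MvPolynomial (Fin 3) K) :=
    (Matrix.mulVecLin (Matrix.of M)).restrictScalars K
  let L₂ : MvPolynomial (Fin 3) K →ₗ[K] (Fin 3 → MvPolynomial (Fin 3) K) :=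
    (LinearMap.toSpanSingleton (MvPolynomial (Fin 3) K) _ P).restrictScalars K
  have hL₀ : ∀ v, L₀ v = ∑ i, v i * F i := fun v => rfl
  have hL₁ : ∀ c i, L₁ c i = ∑ j, M i j * c j := fun v i => rfl
  have hL₂ : ∀ q j, L₂ q j = q * P j := fun q j => rfl
  let S₀ := Submodule.pi Set.univ fun _ : Fin 3 => homogeneousSubmodule (Fin 3) K t
  let S₁ := Submodule.pi Set.univ fun j : Fin 3 => homogeneousSubmodule (Fin 3) K (t - e j)
  let S₂ := homogeneousSubmodule (Fin 3) K (t - (d₂ + 1))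
  -- Exactness in each degree.
  have i₀ : S₀.map L₀ = (Ideal.span {F 0, F 1, F 2}).restrictScalars K ⊓
      homogeneousSubmodule (Fin 3) K (t + m) := by
    ext w
    simp only [Submodule.mem_map, Submodule.mem_inf, Submodule.restrictScalars_mem]
    constructor
    · rintro ⟨v, hv, rfl⟩
      rw [hL₀]
      refine ⟨Submodule.mem_span_triple.2 ⟨v 0, v 1, v 2, ?_⟩, ?_⟩
      · simp [Fin.sum_univ_three]
      · exact Submodule.sum_mem _ fun i _ => (hv i trivial).mul (hFh i)
    · rintro ⟨hw, hwh⟩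
      obtain ⟨a, b, c, habc⟩ := Submodule.mem_span_triple.1 hw
      obtain ⟨v, hv, hvw⟩ := exists_homogeneous_coeffs (ι := Unit) (N := fun _ => F)
        (e := fun _ => m) (n := fun _ => t) (t := t + m) (w := fun _ => w) (c := ![a, b, c])
        (fun _ => hFh) (fun _ => add_comm _ _) (fun _ => hwh)
        (fun _ => by simp [Fin.sum_univ_three, ← habc, mul_comm])
      refine ⟨v, fun i _ => hv i, ?_⟩
      rw [hL₀, hvw ()]
      exact Finset.sum_congr rfl fun i _ => mul_comm _ _
  have i₁ : S₁.map L₁ = S₀ ⊓ LinearMap.ker L₀ := by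
    ext v
    simp only [Submodule.mem_map, Submodule.mem_inf, LinearMap.mem_ker]
    constructor
    · rintro ⟨c, hc, rfl⟩
      refine ⟨fun i _ => ?_, ?_⟩
      · rw [hL₁]
        exact Submodule.sum_mem _ fun j _ => hte j ▸ (hMh i j).mul (hc j trivial)
      · rw [hL₀]
        simp only [hL₁, Finset.sum_mul]
        rw [Finset.sum_comm]
        refine Finset.sum_eq_zero fun j _ => ?_
        rw [← zero_mul (c j), ← hMsyz j, Finset.sum_mul]
        exact Finset.sum_congr rfl fun i _ => by ring
    · rintro ⟨hv, hv0⟩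
      obtain ⟨c, hc⟩ := hMgen v hv0
      obtain ⟨c', hc', hvc⟩ := exists_homogeneous_coeffs hMh hte (fun i => hv i trivial) hc
      exact ⟨c', fun j _ => hc' j, funext fun i => (hvc i).symm⟩
  have i₂ : S₂.map L₂ = S₁ ⊓ LinearMap.ker L₁ := by
    ext c
    simp only [Submodule.mem_map, Submodule.mem_inf, LinearMap.mem_ker]
    constructor
    · rintro ⟨q, hq, rfl⟩
      refine ⟨fun j _ => ?_, funext fun i => ?_⟩
      · rw [hL₂, mul_comm]
        have hj := (hPh j).mul hq
        rwa [hge j] at hj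
      · rw [hL₁, Pi.zero_apply, ← mul_zero q, ← hMP i, Finset.mul_sum]
        exact Finset.sum_congr rfl fun j _ => by rw [hL₂]; ring
    · rintro ⟨hc, hc0⟩
      obtain ⟨q, hq⟩ := hker c fun i => congrFun hc0 i
      obtain ⟨j, hj⟩ := Function.ne_iff.1 hP0
      refine ⟨homogeneousComponent (t - (d₂ + 1)) q, homogeneousComponent_isHomogeneous _ _,
        funext fun j => ?_⟩
      rw [hL₂, mul_comm, ← homogeneousComponent_mul (hPh j) (hge j), mul_comm, ← hq j]
      exact homogeneousComponent_eq_self (hc j trivial)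
  have i₃ : S₂ ⊓ LinearMap.ker L₂ = ⊥ := by
    rw [eq_bot_iff]
    rintro q ⟨-, hq⟩
    obtain ⟨j, hj⟩ := Function.ne_iff.1 hP0
    exact (mul_eq_zero.1 (congrFun hq j)).resolve_right hj
  have c₀ := finrank_map_add_inf_ker L₀ S₀
  have c₁ := finrank_map_add_inf_ker L₁ S₁
  have c₂ := finrank_map_add_inf_ker L₂ S₂
  rw [i₀, ← i₁, finrank_pi] at c₀
  rw [← i₂, finrank_pi] at c₁
  rw [i₃, finrank_bot] at c₂
  simp only [S₂, finrank_homogeneousSubmodule, Fin.sum_univ_three] at c₀ c₁ c₂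
  simp only [e, Matrix.cons_val_zero, Matrix.cons_val_one, Matrix.cons_val] at c₁
  omega

lemma two_mul_choose (n : ℕ) : (2 : ℤ) * ((n + 2).choose 2 : ℕ) = (n + 2) * (n + 1) := by
  have h : (n + 2).choose 2 * 2 = (n + 2) * (n + 1) := by
    rw [Nat.choose_two_right, Nat.div_mul_cancel (Nat.even_mul_pred_self _).two_dvd]
    rfl
  rw [mul_comm]
  exact_mod_cast h

end Assembly
end NearlyFree

open NearlyFree in
/-- For a nearly free curve `V(f)` of degree `d` with exponents `d₁ ≤ d₂`, i.e. whose
Jacobian ideal has a minimal free resolution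
`0 → R(−d−d₂) →P R(1−d−d₁) ⊕ R(1−d−d₂)² →M R(1−d)³ → J_f → 0`,
one has `d₁ + d₂ = d` and the total Tjurina number (the eventually constant value of the
Hilbert function of `R/J_f`) equals `(d−1)² − d₁(d₂−1) − 1`. -/
theorem nearly_free_curve_exponents_and_tjurina
    (d d₁ d₂ : ℕ) (h12 : d₁ ≤ d₂)
    (f : MvPolynomial (Fin 3) ℂ) (hf : f.IsHomogeneous d) (hred : Squarefree f)
    (M : Fin 3 → Fin 3 → MvPolynomial (Fin 3) ℂ)
    (P : Fin 3 → MvPolynomial (Fin 3) ℂ)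
    (hM0 : ∀ i, (M i 0).IsHomogeneous d₁)
    (hM1 : ∀ i, (M i 1).IsHomogeneous d₂)
    (hM2 : ∀ i, (M i 2).IsHomogeneous d₂)
    (hP0 : (P 0).IsHomogeneous (d₂ - d₁ + 1))
    (hP1 : (P 1).IsHomogeneous 1) (hP2 : (P 2).IsHomogeneous 1)
    (hMsyz : ∀ j : Fin 3, ∑ i : Fin 3, M i j * pderiv i f = 0)
    (hMgen : ∀ v : Fin 3 → MvPolynomial (Fin 3) ℂ,
      (∑ i : Fin 3, v i * pderiv i f = 0) →
        ∃ c : Fin 3 → MvPolynomial (Fin 3) ℂ, ∀ i, v i = ∑ j : Fin 3, M i j * c j)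
    (hMP : ∀ i : Fin 3, ∑ j : Fin 3, M i j * P j = 0)
    (hker : ∀ c : Fin 3 → MvPolynomial (Fin 3) ℂ,
      (∀ i : Fin 3, ∑ j : Fin 3, M i j * c j = 0) →
        ∃ q : MvPolynomial (Fin 3) ℂ, ∀ j, c j = q * P j)
    (hPne : P ≠ 0) :
    d₁ + d₂ = d ∧
      ∃ N : ℕ, ∀ t : ℕ, N ≤ t →
        Module.finrank ℂ (homogeneousSubmodule (Fin 3) ℂ t) =
          Module.finrank ℂ
            ((Ideal.span {pderiv 0 f, pderiv 1 f, pderiv 2 f}).restrictScalars ℂ ⊓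
              homogeneousSubmodule (Fin 3) ℂ t : Submodule ℂ (MvPolynomial (Fin 3) ℂ)) +
          ((d - 1) ^ 2 - d₁ * (d₂ - 1) - 1) := by
  -- For constant `f` every vector is a syzygy, so `M` is surjective, hence injective.
  have hd : d ≠ 0 := by
    rintro rfl
    have hfC := homogeneousComponent_eq_self hf
    rw [homogeneousComponent_zero] at hfC
    refine hPne (eq_zero_of_generate_all (fun v => hMgen v ?_) hMP)
    rw [← hfC]
    simp
  have hsum : d₁ + d₂ = d :=
    exponents_add (F := fun i => pderiv i f) h12 hd (primitive_gradient hf hd hred)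
      (primitive_of_kernel hPne hMP hker) hPne (fun i => hf.pderiv) hM0 hM1 hM2 hP0 hP1 hP2
      hMsyz hMgen hMP
  refine ⟨hsum, d₂ + 1 + (d - 1), fun T hT => ?_⟩
  obtain ⟨u, rfl⟩ := Nat.exists_eq_add_of_le hT
  have hcount := hilbert_count (F := fun i => pderiv i f) (m := d - 1) (t := d₂ + 1 + u) h12
    (by omega) hPne (fun i => hf.pderiv) hM0 hM1 hM2 hP0 hP1 hP2 hMsyz hMgen hMP hker
  rw [show d₂ + 1 + u + (d - 1) = d₂ + 1 + (d - 1) + u by omega] at hcount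
  have hle := Submodule.finrank_mono (inf_le_right :
    (Ideal.span {pderiv 0 f, pderiv 1 f, pderiv 2 f}).restrictScalars ℂ ⊓
      homogeneousSubmodule (Fin 3) ℂ (d₂ + 1 + (d - 1) + u) ≤ _)
  rw [finrank_homogeneousSubmodule] at hle ⊢
  generalize Module.finrank ℂ
    ((Ideal.span {pderiv 0 f, pderiv 1 f, pderiv 2 f}).restrictScalars ℂ ⊓
      homogeneousSubmodule (Fin 3) ℂ (d₂ + 1 + (d - 1) + u) :
        Submodule ℂ (MvPolynomial (Fin 3) ℂ)) = j at hcount hle ⊢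
  -- Parameters `d₂ = d₁ + b = r + 1` and `d = k + 1` remove the truncated subtractions.
  obtain ⟨b, rfl⟩ := Nat.exists_eq_add_of_le h12
  obtain ⟨k, rfl⟩ := Nat.exists_eq_succ_of_ne_zero hd
  obtain ⟨r, hr⟩ : ∃ r, d₁ + b = r + 1 := ⟨d₁ + b - 1, by omega⟩
  have hb : (b : ℤ) = r + 1 - d₁ := by
    zify at hr
    linarith
  rw [show d₁ + b + 1 + u - d₁ = b + 1 + u by omega,
    show d₁ + b + 1 + u - (d₁ + b) = 1 + u by omega,
    show d₁ + b + 1 + u - (d₁ + b + 1) = u by omega] at hcount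
  simp only [Nat.succ_eq_add_one, Nat.add_sub_cancel, hr] at *
  have e1 := two_mul_choose (r + 1 + 1 + k + u)
  have e2 := two_mul_choose (b + 1 + u)
  have e3 := two_mul_choose (1 + u)
  have e4 := two_mul_choose u
  have e5 := two_mul_choose (r + 1 + 1 + u)
  have hk : k = d₁ + r := by omega
  subst hk
  have hZ : (((r + 1 + 1 + (d₁ + r) + u + 2).choose 2 : ℕ) : ℤ) =
      j + ((d₁ + r) ^ 2 - d₁ * r - 1) := by
    zify at hcount
    push_cast at e1 e2 e3 e4 e5
    rw [hb] at e2
    refine mul_left_cancel₀ (two_ne_zero (α := ℤ)) ?_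
    linear_combination e1 - 2 * hcount + e2 + 2 * e3 - e4 - 3 * e5
  -- Nonnegativity of the Hilbert function of `R / J_f`, so the subtraction in `ℕ` is harmless.
  have hle' : d₁ * r + 1 ≤ (d₁ + r) ^ 2 := by
    zify at hle ⊢
    linarith
  rw [Nat.sub_sub]
  zify [hle']
  rw [hZ]
  ring
end
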